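/- arXiv:1209.1237 — 2 statements merged into one kernel-verified Lean document; each statement's English description precedes it below -/
import Mathlib

section
/- Let k be an algebraically closed field of characteristic 0. Then the ring R_d of SL_2(k)-invariants in k[A_0,...,A_d] is finitely generated as a k-algebra. -/
noncomputable section

open MvPolynomial


/-- the generic binary form of degree d, with coefficients the variables A_0, ..., A_d -/
def genForm (k : Type*) [Field k] (d : ℕ) :
    MvPolynomial (Fin 2) (MvPolynomial (Fin (d + 1)) k) :=
  ∑ i : Fin (d + 1), C (X i) * X 0 ^ (i : ℕ) * X 1 ^ (d - (i : ℕ))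

/-- the generic binary form after the substitution (X,Y) ↦ (aX+bY, cX+dY) -/
def substGen (k : Type*) [Field k] (d : ℕ) (g : Matrix (Fin 2) (Fin 2) k) :
    MvPolynomial (Fin 2) (MvPolynomial (Fin (d + 1)) k) :=
  aeval (fun i : Fin 2 => C (C (g i 0)) * X 0 + C (C (g i 1)) * X 1) (genForm k d)

/-- the i-th coefficient of the transformed generic binary form, as a polynomial
in the coefficients A_0, ..., A_d -/
def actPoly (k : Type*) [Field k] (d : ℕ) (g : Matrix (Fin 2) (Fin 2) k) :
    Fin (d + 1) → MvPolynomial (Fin (d + 1)) k := fun i =>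
  coeff (Finsupp.single (0 : Fin 2) (i : ℕ) + Finsupp.single (1 : Fin 2) (d - (i : ℕ)))
    (substGen k d g)

/-- the action I ↦ I^g on the coordinate ring k[A_0,...,A_d], given by
(I^g)(f) = I(g(f)) -/
def actHom (k : Type*) [Field k] (d : ℕ) (g : Matrix (Fin 2) (Fin 2) k) :
    MvPolynomial (Fin (d + 1)) k →ₐ[k] MvPolynomial (Fin (d + 1)) k :=
  aeval (actPoly k d g)

/-- the ring R_d of SL_2(k)-invariants in k[A_0,...,A_d] -/
def invariantRing (k : Type*) [Field k] (d : ℕ) :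
    Subalgebra k (MvPolynomial (Fin (d + 1)) k) :=
  ⨅ g : Matrix.SpecialLinearGroup (Fin 2) k,
    AlgHom.equalizer (actHom k d (g : Matrix (Fin 2) (Fin 2) k)) (AlgHom.id k _)

/-- the nullcone N_d: the common zero set of all homogeneous invariants of positive degree -/
def nullcone (k : Type*) [Field k] (d : ℕ) : Set (Fin (d + 1) → k) :=
  {a | ∀ I ∈ invariantRing k d, ∀ n : ℕ, 0 < n → I.IsHomogeneous n → eval a I = 0}

/-!
Hilbert's argument: a finite set of homogeneous invariants generating the ideal spanned by all
invariants of positive degree also generates the algebra of invariants, as soon as every invariant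
in the ideal is a combination of the generators with *invariant* coefficients. Cayley's Omega
process on polynomial functions of a generic matrix `x` provides these coefficients. A homogeneous
invariant `p` of degree `n` satisfies `x • p = det x ^ w * p` with `w = d * n / 2`; this uses only
the torus elements `diag(2, 2⁻¹)` and `diag(t, 1)`, so square roots of determinants are not needed.
Applying `Ω ^ w` and evaluating at `x = 0` multiplies `p` by a nonzero integer, while it turns a
relation `p = ∑ aᵢ fᵢ` between invariants `p` and `fᵢ` into one whose coefficients are invariant.
-/

section GradedAlgebra

open DirectSum

variable {k R : Type*} [CommRing k] [CommRing R] [Algebra k R] {𝒜 : ℕ → Submodule k R}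
  [GradedAlgebra 𝒜] {A B : Subalgebra k R} {s : Set R}

lemma decompose_mem_of_mem_span {n : ℕ} (hA : SetLike.IsHomogeneous 𝒜 A) (hsB : s ⊆ B)
    (hs : ∀ f ∈ s, ∃ m, 0 < m ∧ f ∈ 𝒜 m) (hB : ∀ m < n, ∀ p ∈ A, p ∈ 𝒜 m → p ∈ B)
    {p : R} (hp : p ∈ Submodule.span A s) : (decompose 𝒜 p n : R) ∈ B := by
  induction hp using Submodule.closure_induction with
  | zero => simp
  | add x y _ _ hx hy => simpa using add_mem hx hy
  | smul_mem a f hf =>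
    obtain ⟨m, hm, hfm⟩ := hs f hf
    rw [Subalgebra.smul_def, smul_eq_mul, coe_decompose_mul_of_right_mem 𝒜 n hfm]
    split_ifs with hmn
    · exact mul_mem (hB (n - m) (by lia) _ (hA _ a.2) (SetLike.coe_mem _)) (hsB hf)
    · exact zero_mem B

lemma le_adjoin_of_forall_mem_span (hA : SetLike.IsHomogeneous 𝒜 A) (h𝒜 : 𝒜 0 ≤ 1)
    (hs : ∀ f ∈ s, ∃ m, 0 < m ∧ f ∈ 𝒜 m)
    (hspan : ∀ n, 0 < n → ∀ p ∈ A, p ∈ 𝒜 n → p ∈ Submodule.span A s) :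
    A ≤ Algebra.adjoin k s := by
  have mem_of_homogeneous : ∀ n, ∀ p ∈ A, p ∈ 𝒜 n → p ∈ Algebra.adjoin k s := by
    intro n
    induction n using Nat.strong_induction_on with
    | _ n ih =>
      intro p hp hpn
      obtain rfl | hn := Nat.eq_zero_or_pos n
      · obtain ⟨c, rfl⟩ := Submodule.mem_one.1 (h𝒜 hpn)
        exact Subalgebra.algebraMap_mem _ c
      · rw [← decompose_of_mem_same 𝒜 hpn]
        exact decompose_mem_of_mem_span hA Algebra.subset_adjoin hs ih (hspan n hn p hp hpn)
  classical
  intro p hp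
  rw [← sum_support_decompose 𝒜 p]
  exact sum_mem fun n _ => mem_of_homogeneous n _ (hA n hp) (SetLike.coe_mem _)

lemma isHomogeneous_iInf_equalizer_id {ι : Type*} {φ : ι → R →ₐ[k] R}
    (hφ : ∀ i n f, f ∈ 𝒜 n → φ i f ∈ 𝒜 n) :
    SetLike.IsHomogeneous 𝒜 (⨅ i, AlgHom.equalizer (φ i) (AlgHom.id k R)) := by
  intro n f hf
  simp only [Algebra.mem_iInf, AlgHom.mem_equalizer, AlgHom.id_apply] at hf ⊢
  intro i
  let gradedHom : GradedAlgHom k 𝒜 𝒜 := { φ i with map_mem := hφ i _ _ }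
  calc φ i (decompose 𝒜 f n) = decompose 𝒜 (φ i f) n := map_directSumDecompose 𝒜 𝒜 gradedHom
    _ = decompose 𝒜 f n := by rw [hf i]

theorem fg_of_mem_span_of_mem_ideal_span [IsNoetherianRing R] (hA : SetLike.IsHomogeneous 𝒜 A)
    (h𝒜 : 𝒜 0 ≤ 1)
    (hspan : ∀ t ⊆ {f | f ∈ A ∧ SetLike.IsHomogeneousElem 𝒜 f}, ∀ p ∈ A,
      SetLike.IsHomogeneousElem 𝒜 p → p ∈ Ideal.span t → p ∈ Submodule.span A t) :
    A.FG := by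
  set irrelevant : Set R := {f | f ∈ A ∧ ∃ m, 0 < m ∧ f ∈ 𝒜 m}
  obtain ⟨t, ht, hspan_eq⟩ := (Submodule.fg_span_iff_fg_span_finset_subset irrelevant).1
    (IsNoetherian.noetherian (Ideal.span irrelevant))
  refine ⟨t, le_antisymm (Algebra.adjoin_le fun f hf => (ht hf).1)
    (le_adjoin_of_forall_mem_span hA h𝒜 (fun f hf => (ht hf).2) fun n hn p hp hpn => ?_)⟩
  refine hspan t (fun f hf => ⟨(ht hf).1, ?_⟩) p hp ⟨n, hpn⟩ ?_
  · obtain ⟨-, m, -, hfm⟩ := ht hf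
    exact ⟨m, hfm⟩
  · exact hspan_eq.le (Submodule.subset_span ⟨hp, n, hn, hpn⟩)

end GradedAlgebra

section GenericMatrix

variable {n R S : Type*} [CommRing R] [CommRing S]

/-- Evaluation of a polynomial function of an `n × n` matrix at the matrix `g`. -/
def evalMatrix (g : Matrix n n S) : MvPolynomial (n × n) S →ₐ[S] S :=
  aeval fun ij => g ij.1 ij.2

@[simp]
lemma evalMatrix_X (g : Matrix n n S) (ij : n × n) : evalMatrix g (X ij) = g ij.1 ij.2 :=
  aeval_X _ _

@[simp]
lemma evalMatrix_C (g : Matrix n n S) (c : S) : evalMatrix g (C c) = c :=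
  (evalMatrix g).commutes c

lemma evalMatrix_map (φ : R →+* S) (g : Matrix n n R) (p : MvPolynomial (n × n) R) :
    evalMatrix (g.map φ) (map φ p) = φ (evalMatrix g p) := by
  simp [evalMatrix, aeval_eq_eval, eval_map, eval₂_comp, Function.comp_def]

lemma eq_of_evalMatrix_map_eq [Infinite R] [IsDomain S] {φ : R →+* S}
    (hφ : Function.Injective φ) {p q : MvPolynomial (n × n) S}
    (h : ∀ g : Matrix n n R, evalMatrix (g.map φ) p = evalMatrix (g.map φ) q) : p = q := by
  refine funext_set (fun _ => Set.range φ) (fun _ => Set.infinite_range_of_injective hφ)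
    fun x hx => ?_
  choose f hf using fun ij => hx ij trivial
  simpa [evalMatrix, hf, aeval_eq_eval] using h (Matrix.of fun i j => f (i, j))

variable [Fintype n]

/-- The substitution `x ↦ g x` of the generic `n × n` matrix `x`: it turns the polynomial
function `p` into `x ↦ p (g x)`. -/
def leftTranslate (g : Matrix n n S) : MvPolynomial (n × n) S →ₐ[S] MvPolynomial (n × n) S :=
  aeval fun ij => (g.map C * Matrix.mvPolynomialX n n S : Matrix n n _) ij.1 ij.2

lemma leftTranslate_X (g : Matrix n n S) (i j : n) :
    leftTranslate g (X (i, j)) = ∑ l, C (g i l) * X (l, j) := by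
  simp [leftTranslate, Matrix.mul_apply]

lemma evalMatrix_leftTranslate (g h : Matrix n n S) (p : MvPolynomial (n × n) S) :
    evalMatrix h (leftTranslate g p) = evalMatrix (g * h) p := by
  suffices (evalMatrix h).comp (leftTranslate g) = evalMatrix (g * h) from
    DFunLike.congr_fun this p
  ext ⟨i, j⟩
  simp [leftTranslate_X, Matrix.mul_apply]

lemma pderiv_leftTranslate (g : Matrix n n S) (i j : n) (p : MvPolynomial (n × n) S) :
    pderiv (i, j) (leftTranslate g p) = ∑ l, C (g l i) * leftTranslate g (pderiv (l, j) p) := by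
  classical
  induction p using MvPolynomial.induction_on with
  | C c => simp
  | add p q hp hq => simp only [map_add, hp, hq, mul_add, Finset.sum_add_distrib]
  | mul_X p ab hp =>
    obtain ⟨a, b⟩ := ab
    have pderiv_X_entry : pderiv (i, j) (leftTranslate g (X (a, b))) =
        ∑ l, C (g l i) * leftTranslate g (pderiv (l, j) (X (a, b))) := by
      by_cases hbj : b = j <;>
        simp [leftTranslate_X, pderiv_X, Pi.single_apply, hbj, apply_ite]
    simp only [map_mul, pderiv_mul, map_add, hp, pderiv_X_entry, mul_add, Finset.sum_add_distrib,
      Finset.sum_mul, Finset.mul_sum, mul_assoc, mul_left_comm (leftTranslate g p)]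

variable [DecidableEq n]

variable (n S) in
/-- The determinant of the generic `n × n` matrix. -/
abbrev genericDet : MvPolynomial (n × n) S := (Matrix.mvPolynomialX n n S).det

lemma evalMatrix_genericDet (g : Matrix n n S) : evalMatrix g (genericDet n S) = g.det :=
  Matrix.eval_det_mvPolynomialX n S fun ij => g ij.1 ij.2

lemma map_genericDet (φ : R →+* S) : map φ (genericDet n R) = genericDet n S := by
  rw [genericDet, RingHom.map_det]
  congr 1
  ext1 i j
  simp

lemma leftTranslate_genericDet (g : Matrix n n S) :
    leftTranslate g (genericDet n S) = C g.det * genericDet n S := by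
  have : (leftTranslate g).mapMatrix (Matrix.mvPolynomialX n n S) =
      g.map C * Matrix.mvPolynomialX n n S := by
    ext1 i j
    simp [leftTranslate]
  rw [genericDet, AlgHom.map_det, this, Matrix.det_mul, ← RingHom.mapMatrix_apply,
    ← RingHom.map_det]

end GenericMatrix

lemma pderiv_comm {σ R : Type*} [CommSemiring R] (i j : σ) (p : MvPolynomial σ R) :
    pderiv i (pderiv j p) = pderiv j (pderiv i p) := by
  classical
  obtain rfl | hij := eq_or_ne i j
  · rfl
  · ext m
    simp [coeff_pderiv, hij, hij.symm, add_right_comm _ (Finsupp.single i 1), mul_right_comm]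

section CayleyOmega

variable {R S : Type*} [CommRing R] [CommRing S]

variable (S) in
/-- Cayley's Omega process `∂²/∂x₀₀∂x₁₁ - ∂²/∂x₀₁∂x₁₀` on polynomial functions of a `2 × 2`
matrix. -/
def cayleyOmega : Module.End S (MvPolynomial (Fin 2 × Fin 2) S) :=
  (pderiv (0, 0)).toLinearMap * (pderiv (1, 1)).toLinearMap -
    (pderiv (0, 1)).toLinearMap * (pderiv (1, 0)).toLinearMap

lemma cayleyOmega_apply (p : MvPolynomial (Fin 2 × Fin 2) S) :
    cayleyOmega S p =
      pderiv (0, 0) (pderiv (1, 1) p) - pderiv (0, 1) (pderiv (1, 0) p) :=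
  rfl

lemma map_cayleyOmega_pow (φ : R →+* S) (w : ℕ) (p : MvPolynomial (Fin 2 × Fin 2) R) :
    map φ ((cayleyOmega R ^ w) p) = (cayleyOmega S ^ w) (map φ p) := by
  induction w generalizing p with
  | zero => simp
  | succ w ih => simp only [pow_succ, Module.End.mul_apply, ih, cayleyOmega_apply, map_sub,
      pderiv_map]

lemma cayleyOmega_leftTranslate (g : Matrix (Fin 2) (Fin 2) S)
    (p : MvPolynomial (Fin 2 × Fin 2) S) :
    cayleyOmega S (leftTranslate g p) = C g.det * leftTranslate g (cayleyOmega S p) := by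
  simp only [cayleyOmega_apply, pderiv_leftTranslate, Fin.sum_univ_two, map_add, pderiv_C_mul,
    map_sub, Matrix.det_fin_two, map_mul]
  rw [pderiv_comm (0, 1) (0, 0), pderiv_comm (0, 1) (1, 0), pderiv_comm (1, 1) (0, 0),
    pderiv_comm (1, 1) (1, 0)]
  ring

lemma cayleyOmega_pow_leftTranslate {g : Matrix (Fin 2) (Fin 2) S} (hg : g.det = 1) (w : ℕ)
    (p : MvPolynomial (Fin 2 × Fin 2) S) :
    (cayleyOmega S ^ w) (leftTranslate g p) = leftTranslate g ((cayleyOmega S ^ w) p) := by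
  induction w generalizing p with
  | zero => simp
  | succ w ih =>
    simp only [pow_succ, Module.End.mul_apply, cayleyOmega_leftTranslate, hg, map_one, one_mul, ih]

lemma cayleyOmega_genericDet_pow_succ (v : ℕ) :
    cayleyOmega S (genericDet (Fin 2) S ^ (v + 1)) =
      ((v + 1) * (v + 2)) • genericDet (Fin 2) S ^ v := by
  set D := genericDet (Fin 2) S
  have hD : D = X (0, 0) * X (1, 1) - X (0, 1) * X (1, 0) := by simp [D, Matrix.det_fin_two]
  have pderiv_pow_succ (ij : Fin 2 × Fin 2) (u : ℕ) :
      pderiv ij (D ^ (u + 1)) = (u + 1) • (D ^ u * pderiv ij D) := by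
    rw [pderiv_pow, Nat.add_sub_cancel, nsmul_eq_mul, mul_assoc]
  have pderiv_11 : pderiv (1, 1) D = X (0, 0) := by simp [hD, pderiv_X]
  have pderiv_10 : pderiv (1, 0) D = -X (0, 1) := by simp [hD, pderiv_X]
  have pderiv_00 : pderiv (0, 0) D = X (1, 1) := by simp [hD, pderiv_X]
  have pderiv_01 : pderiv (0, 1) D = -X (1, 0) := by simp [hD, pderiv_X]
  cases v with
  | zero => simp [cayleyOmega_apply, pderiv_11, pderiv_10]; norm_num
  | succ v =>
    simp only [cayleyOmega_apply, pderiv_pow_succ, pderiv_11, pderiv_10, map_nsmul, pderiv_mul,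
      pderiv_00, pderiv_01, map_neg, pderiv_X_self]
    simp only [nsmul_eq_mul, pow_succ _ v, hD]
    push_cast
    ring

lemma cayleyOmega_pow_genericDet_pow (w : ℕ) :
    (cayleyOmega S ^ w) (genericDet (Fin 2) S ^ w) =
      ((w.factorial * (w + 1).factorial : ℕ) : MvPolynomial (Fin 2 × Fin 2) S) := by
  induction w with
  | zero => simp
  | succ w ih =>
    rw [pow_succ (cayleyOmega S), Module.End.mul_apply, cayleyOmega_genericDet_pow_succ,
      map_nsmul, ih, nsmul_eq_mul, ← Nat.cast_mul]
    congr 1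
    simp only [Nat.factorial_succ]
    ring

end CayleyOmega

section MatrixAction

variable {n k S : Type*} [Field k] [CommRing S] [Algebra k S]

/-- The action of the matrix `g` on `S`, obtained by specializing at `g` a coaction `α`, which
sends `p` to the polynomial function `x ↦ x • p` of the generic matrix `x`. -/
def coactionAt (α : S →ₐ[k] MvPolynomial (n × n) S) (g : Matrix n n k) : S →ₐ[k] S :=
  ((evalMatrix (g.map (algebraMap k S))).restrictScalars k).comp α

lemma coactionAt_apply (α : S →ₐ[k] MvPolynomial (n × n) S) (g : Matrix n n k) (p : S) :
    coactionAt α g p = evalMatrix (g.map (algebraMap k S)) (α p) :=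
  rfl

variable [Fintype n]

/-- The coaction `α` defines an action of the multiplicative semigroup of matrices. The identity
matrix is not required to act trivially. -/
def IsMatrixAction (α : S →ₐ[k] MvPolynomial (n × n) S) : Prop :=
  ∀ g h, (coactionAt α g).comp (coactionAt α h) = coactionAt α (g * h)

lemma map_coactionAt_coaction [Infinite k] [IsDomain S] {α : S →ₐ[k] MvPolynomial (n × n) S}
    (hα : IsMatrixAction α) (g : Matrix n n k) (p : S) :
    map (coactionAt α g : S →+* S) (α p) = leftTranslate (g.map (algebraMap k S)) (α p) := by
  refine eq_of_evalMatrix_map_eq (algebraMap k S).injective fun h => ?_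
  have map_map_algebraMap : (h.map (algebraMap k S)).map (coactionAt α g : S →+* S) =
      h.map (algebraMap k S) := by
    ext1 i j
    simp
  calc evalMatrix (h.map (algebraMap k S)) (map (coactionAt α g : S →+* S) (α p))
      = coactionAt α g (coactionAt α h p) := by
        conv_lhs => rw [← map_map_algebraMap]
        exact evalMatrix_map _ _ _
    _ = coactionAt α (g * h) p := DFunLike.congr_fun (hα g h) p
    _ = evalMatrix (h.map (algebraMap k S)) (leftTranslate (g.map (algebraMap k S)) (α p)) := by
        rw [evalMatrix_leftTranslate, ← Matrix.map_mul, coactionAt_apply]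

variable [DecidableEq n]

/-- The subalgebra of `SL_n`-invariants of the action defined by a coaction `α`. -/
def slInvariants (α : S →ₐ[k] MvPolynomial (n × n) S) : Subalgebra k S :=
  ⨅ g : Matrix.SpecialLinearGroup n k,
    AlgHom.equalizer (coactionAt α (g : Matrix n n k)) (AlgHom.id k S)

lemma mem_slInvariants {α : S →ₐ[k] MvPolynomial (n × n) S} {p : S} :
    p ∈ slInvariants α ↔ ∀ g : Matrix n n k, g.det = 1 → coactionAt α g p = p := by
  simp only [slInvariants, Algebra.mem_iInf, AlgHom.mem_equalizer, AlgHom.id_apply]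
  exact ⟨fun h g hg => h ⟨g, hg⟩, fun h g => h _ g.2⟩

end MatrixAction

section OmegaReynolds

variable {k S : Type*} [Field k] [CommRing S] [Algebra k S]

variable (S) in
/-- The `w`-fold Omega process followed by evaluation at the zero matrix. Applied to
`det x ^ v * (x • p)` it yields an `SL₂`-invariant, and so it plays the role of the Reynolds
operator. -/
def omegaReynolds (w : ℕ) : MvPolynomial (Fin 2 × Fin 2) S →ₗ[S] S :=
  (evalMatrix 0).toLinearMap ∘ₗ cayleyOmega S ^ w

lemma omegaReynolds_apply (w : ℕ) (q : MvPolynomial (Fin 2 × Fin 2) S) :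
    omegaReynolds S w q = evalMatrix 0 ((cayleyOmega S ^ w) q) :=
  rfl

lemma map_omegaReynolds {R : Type*} [CommRing R] (φ : R →+* S) (w : ℕ)
    (q : MvPolynomial (Fin 2 × Fin 2) R) :
    φ (omegaReynolds R w q) = omegaReynolds S w (map φ q) := by
  rw [omegaReynolds_apply, omegaReynolds_apply, ← map_cayleyOmega_pow, ← evalMatrix_map,
    Matrix.map_zero φ (map_zero φ)]

lemma omegaReynolds_leftTranslate {g : Matrix (Fin 2) (Fin 2) S} (hg : g.det = 1) (w : ℕ)
    (q : MvPolynomial (Fin 2 × Fin 2) S) :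
    omegaReynolds S w (leftTranslate g q) = omegaReynolds S w q := by
  rw [omegaReynolds_apply, cayleyOmega_pow_leftTranslate hg, evalMatrix_leftTranslate, mul_zero,
    omegaReynolds_apply]

lemma omegaReynolds_mul_C (w : ℕ) (q : MvPolynomial (Fin 2 × Fin 2) S) (c : S) :
    omegaReynolds S w (q * C c) = omegaReynolds S w q * c := by
  rw [mul_comm, ← smul_eq_C_mul, map_smul, smul_eq_mul, mul_comm]

lemma omegaReynolds_genericDet_pow (w : ℕ) :
    omegaReynolds S w (genericDet (Fin 2) S ^ w) = ((w.factorial * (w + 1).factorial : ℕ) : S) := by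
  rw [omegaReynolds_apply, cayleyOmega_pow_genericDet_pow, map_natCast]

variable {α : S →ₐ[k] MvPolynomial (Fin 2 × Fin 2) S} [IsDomain S]

lemma omegaReynolds_mem_slInvariants [Infinite k] (hα : IsMatrixAction α) (w v : ℕ) (p : S) :
    omegaReynolds S w (genericDet (Fin 2) S ^ v * α p) ∈ slInvariants α := by
  refine mem_slInvariants.2 fun g hg => ?_
  have det_map_eq_one : (g.map (algebraMap k S)).det = 1 := by
    rw [← RingHom.mapMatrix_apply, ← RingHom.map_det, hg, map_one]
  have equivariant : map (coactionAt α g : S →+* S) (genericDet (Fin 2) S ^ v * α p) =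
      leftTranslate (g.map (algebraMap k S)) (genericDet (Fin 2) S ^ v * α p) := by
    rw [map_mul, map_mul, map_pow, map_pow, map_genericDet, leftTranslate_genericDet,
      det_map_eq_one, map_one, one_mul, map_coactionAt_coaction hα]
  calc coactionAt α g (omegaReynolds S w (genericDet (Fin 2) S ^ v * α p))
      = omegaReynolds S w (map (coactionAt α g : S →+* S) (genericDet (Fin 2) S ^ v * α p)) :=
        map_omegaReynolds (coactionAt α g : S →+* S) w _
    _ = omegaReynolds S w (genericDet (Fin 2) S ^ v * α p) := by
        rw [equivariant, omegaReynolds_leftTranslate det_map_eq_one]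

lemma omegaReynolds_coaction_mem_span [Infinite k] (hα : IsMatrixAction α) {s : Set S}
    (hs : ∀ f ∈ s, ∃ v, α f = genericDet (Fin 2) S ^ v * C f) (w : ℕ) {p : S}
    (hp : p ∈ Ideal.span s) :
    omegaReynolds S w (α p) ∈ Submodule.span (slInvariants α) s := by
  induction hp using Submodule.closure_induction with
  | zero => simp
  | add x y _ _ hx hy => simpa using add_mem hx hy
  | smul_mem a f hf =>
    obtain ⟨v, hv⟩ := hs f hf
    have : omegaReynolds S w (α (a • f)) =
        omegaReynolds S w (genericDet (Fin 2) S ^ v * α a) * f := by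
      rw [smul_eq_mul, map_mul, hv, ← mul_assoc, omegaReynolds_mul_C, mul_comm (α a)]
    rw [this]
    exact Submodule.smul_mem _ (⟨_, omegaReynolds_mem_slInvariants hα w v a⟩ : slInvariants α)
      (Submodule.subset_span hf)

theorem mem_span_slInvariants_of_mem_ideal_span [CharZero k] (hα : IsMatrixAction α) {s : Set S}
    (hs : ∀ f ∈ s, ∃ v, α f = genericDet (Fin 2) S ^ v * C f) {p : S}
    (hp : ∃ w, α p = genericDet (Fin 2) S ^ w * C p) (hps : p ∈ Ideal.span s) :
    p ∈ Submodule.span (slInvariants α) s := by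
  obtain ⟨w, hw⟩ := hp
  set c : k := ((w.factorial * (w + 1).factorial : ℕ) : k)
  have hc : c ≠ 0 := Nat.cast_ne_zero.2 (by positivity)
  have omegaReynolds_eq : omegaReynolds S w (α p) = c • p := by
    rw [hw, omegaReynolds_mul_C, omegaReynolds_genericDet_pow, Algebra.smul_def, map_natCast]
  have hcp : c • p ∈ Submodule.span (slInvariants α) s :=
    omegaReynolds_eq ▸ omegaReynolds_coaction_mem_span hα hs w hps
  rw [← inv_smul_smul₀ hc p]
  exact Submodule.smul_of_tower_mem _ c⁻¹ hcp

end OmegaReynolds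

section BinaryForms

variable {B : Type*} [CommRing B]

/-- The exponent of the monomial `X ^ i * Y ^ (d - i)`, used for `i ≤ d`. -/
def binaryExponent (d i : ℕ) : Fin 2 →₀ ℕ :=
  Finsupp.single 0 i + Finsupp.single 1 (d - i)

lemma binaryExponent_injective (d : ℕ) : Function.Injective (binaryExponent d) := fun i j h => by
  simpa [binaryExponent] using DFunLike.congr_fun h 0

lemma degree_binaryExponent {d i : ℕ} (hi : i ≤ d) : (binaryExponent d i).degree = d := by
  simp [binaryExponent, Finsupp.degree_eq_sum, hi]

lemma binaryExponent_apply_zero (m : Fin 2 →₀ ℕ) : binaryExponent m.degree (m 0) = m := by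
  ext j
  fin_cases j <;> simp [binaryExponent, Finsupp.degree_eq_sum]

lemma monomial_binaryExponent (d i : ℕ) (c : B) :
    monomial (binaryExponent d i) c = C c * X 0 ^ i * X 1 ^ (d - i) := by
  rw [binaryExponent, C_mul_X_pow_eq_monomial, X_pow_eq_monomial, monomial_mul, mul_one]

lemma coeff_sum_monomial_binaryExponent {d : ℕ} (c : Fin (d + 1) → B) (i : Fin (d + 1)) :
    coeff (binaryExponent d i) (∑ j : Fin (d + 1), monomial (binaryExponent d j) (c j)) = c i := by
  simp [coeff_sum, coeff_monomial, (binaryExponent_injective d).eq_iff, Fin.val_inj]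

lemma isHomogeneous_sum_monomial_binaryExponent {d : ℕ} (c : Fin (d + 1) → B) :
    (∑ j : Fin (d + 1), monomial (binaryExponent d j) (c j)).IsHomogeneous d :=
  IsHomogeneous.sum _ _ _ fun j _ =>
    isHomogeneous_monomial _ (degree_binaryExponent (Nat.lt_succ_iff.1 j.2))

lemma eq_sum_monomial_binaryExponent {d : ℕ} {p : MvPolynomial (Fin 2) B}
    (hp : p.IsHomogeneous d) :
    p = ∑ i : Fin (d + 1), monomial (binaryExponent d i) (coeff (binaryExponent d i) p) := by
  ext m
  by_cases hm : m.degree = d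
  · have hm0 : m 0 < d + 1 := Nat.lt_succ_iff.2 (hm ▸ Finsupp.le_degree 0 m)
    have exponent_eq : binaryExponent d (⟨m 0, hm0⟩ : Fin (d + 1)) = m :=
      hm ▸ binaryExponent_apply_zero m
    rw [← exponent_eq, coeff_sum_monomial_binaryExponent]
  · rw [hp.coeff_eq_zero hm, (isHomogeneous_sum_monomial_binaryExponent _).coeff_eq_zero hm]

variable (k : Type*) [Field k] (d : ℕ)

lemma genForm_eq_sum_monomial :
    genForm k d = ∑ i : Fin (d + 1), monomial (binaryExponent d i) (X i) := by
  simp only [genForm, monomial_binaryExponent]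

lemma substGen_eq_bind₁ (g : Matrix (Fin 2) (Fin 2) k) :
    substGen k d g = bind₁ (g.map C).toMvPolynomial (genForm k d) := by
  rw [substGen, aeval_eq_bind₁]
  congr 2 with i : 1
  simp [Matrix.toMvPolynomial, Fin.sum_univ_two, C_mul_X_eq_monomial]

lemma substGen_isHomogeneous (g : Matrix (Fin 2) (Fin 2) k) : (substGen k d g).IsHomogeneous d := by
  have genForm_isHomogeneous : (genForm k d).IsHomogeneous d := by
    rw [genForm_eq_sum_monomial]
    exact isHomogeneous_sum_monomial_binaryExponent X
  rw [substGen_eq_bind₁, ← aeval_eq_bind₁]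
  simpa only [one_mul] using
    genForm_isHomogeneous.aeval _ (Matrix.toMvPolynomial_isHomogeneous (g.map C))

lemma actHom_X (g : Matrix (Fin 2) (Fin 2) k) (i : Fin (d + 1)) :
    actHom k d g (X i) = coeff (binaryExponent d i) (substGen k d g) :=
  aeval_X _ _

lemma map_actHom_genForm (g : Matrix (Fin 2) (Fin 2) k) :
    map (actHom k d g : _ →+* MvPolynomial (Fin (d + 1)) k) (genForm k d) = substGen k d g := by
  rw [eq_sum_monomial_binaryExponent (substGen_isHomogeneous k d g), genForm_eq_sum_monomial]
  simp [actHom_X]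

lemma actHom_comp_actHom (g h : Matrix (Fin 2) (Fin 2) k) :
    (actHom k d g).comp (actHom k d h) = actHom k d (g * h) := by
  have map_actHom_substGen :
      map (actHom k d g : _ →+* MvPolynomial (Fin (d + 1)) k) (substGen k d h) =
        substGen k d (g * h) := by
    have map_toMvPolynomial (i : Fin 2) :
        map (actHom k d g : _ →+* MvPolynomial (Fin (d + 1)) k)
            ((h.map (C : k →+* MvPolynomial (Fin (d + 1)) k)).toMvPolynomial i) =
          (h.map (C : k →+* MvPolynomial (Fin (d + 1)) k)).toMvPolynomial i := by
      rw [← Matrix.toMvPolynomial_map]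
      congr 1
      ext1 i j
      simp [actHom]
    rw [substGen_eq_bind₁, map_bind₁, map_actHom_genForm, substGen_eq_bind₁, bind₁_bind₁,
      substGen_eq_bind₁, Matrix.map_mul]
    simp only [map_toMvPolynomial, ← Matrix.toMvPolynomial_mul]
  ext1 i
  rw [AlgHom.comp_apply, actHom_X, actHom_X, ← map_actHom_substGen, coeff_map]
  rfl

lemma coeff_substGen_isHomogeneous (g : Matrix (Fin 2) (Fin 2) k) (m : Fin 2 →₀ ℕ) :
    (coeff m (substGen k d g)).IsHomogeneous 1 := by
  have bind₁_monomial_X (j : Fin (d + 1)) (e : Fin 2 →₀ ℕ) :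
      bind₁ (g.map C).toMvPolynomial (monomial e (X j)) =
        C (X j) * map C (bind₁ g.toMvPolynomial (monomial e 1)) := by
    rw [map_bind₁, map_monomial, map_one, ← bind₁_C_right, ← map_mul, C_mul_monomial, mul_one]
    congr 2 with i : 1
    exact Matrix.toMvPolynomial_map C g i
  rw [substGen_eq_bind₁, genForm_eq_sum_monomial, map_sum, coeff_sum]
  refine IsHomogeneous.sum _ _ _ fun j _ => ?_
  rw [bind₁_monomial_X, coeff_C_mul, coeff_map]
  exact (isHomogeneous_X k j).mul (isHomogeneous_C _ _)

lemma actHom_isHomogeneous (g : Matrix (Fin 2) (Fin 2) k) {n : ℕ}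
    {p : MvPolynomial (Fin (d + 1)) k} (hp : p.IsHomogeneous n) :
    (actHom k d g p).IsHomogeneous n := by
  rw [← one_mul n]
  exact hp.aeval _ fun i => coeff_substGen_isHomogeneous k d g _

attribute [local instance] MvPolynomial.gradedAlgebra in
lemma invariantRing_isHomogeneous :
    DirectSum.SetLike.IsHomogeneous (homogeneousSubmodule (Fin (d + 1)) k) (invariantRing k d) :=
  isHomogeneous_iInf_equalizer_id fun g _ _ => actHom_isHomogeneous k d g

lemma mem_invariantRing {p : MvPolynomial (Fin (d + 1)) k} :
    p ∈ invariantRing k d ↔ ∀ g : Matrix (Fin 2) (Fin 2) k, g.det = 1 → actHom k d g p = p := by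
  simp only [invariantRing, Algebra.mem_iInf, AlgHom.mem_equalizer, AlgHom.id_apply]
  exact ⟨fun h g hg => h ⟨g, hg⟩, fun h g => h _ g.2⟩

end BinaryForms

section Coaction

variable (k : Type*) [Field k] (d : ℕ)

/-- The coaction of `2 × 2` matrices on the coordinate ring of binary forms of degree `d`: it sends
`A_i` to the `i`-th coefficient of the generic form after the generic linear substitution. -/
def formCoaction : MvPolynomial (Fin (d + 1)) k →ₐ[k]
    MvPolynomial (Fin 2 × Fin 2) (MvPolynomial (Fin (d + 1)) k) :=
  aeval fun i => coeff (binaryExponent d i)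
    (bind₁ (Matrix.mvPolynomialX (Fin 2) (Fin 2) _).toMvPolynomial (map C (genForm k d)))

lemma coactionAt_formCoaction (g : Matrix (Fin 2) (Fin 2) k) :
    coactionAt (formCoaction k d) g = actHom k d g := by
  set S := MvPolynomial (Fin (d + 1)) k
  let ev : MvPolynomial (Fin 2 × Fin 2) S →+* S := evalMatrix (g.map (algebraMap k S))
  have map_generic : (Matrix.mvPolynomialX (Fin 2) (Fin 2) S).map ev = g.map C := by
    ext1 i j
    simp [ev, S, algebraMap_eq]
  have ev_comp_C : ev.comp C = RingHom.id S := RingHom.ext (evalMatrix_C _)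
  ext1 i
  calc coactionAt (formCoaction k d) g (X i)
      = coeff (binaryExponent d i) (map ev
          (bind₁ (Matrix.mvPolynomialX (Fin 2) (Fin 2) S).toMvPolynomial
            (map C (genForm k d)))) := by
        rw [coeff_map, coactionAt_apply, formCoaction, aeval_X]
        rfl
    _ = coeff (binaryExponent d i) (substGen k d g) := by
        rw [map_bind₁, map_map, ev_comp_C, map_id, substGen_eq_bind₁, ← map_generic]
        congr 3 with j : 1
        exact (Matrix.toMvPolynomial_map ev _ j).symm
    _ = actHom k d g (X i) := (actHom_X k d g i).symm

lemma isMatrixAction_formCoaction : IsMatrixAction (formCoaction k d) := fun g h => by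
  simp only [coactionAt_formCoaction, actHom_comp_actHom]

lemma slInvariants_formCoaction : slInvariants (formCoaction k d) = invariantRing k d := by
  simp only [slInvariants, invariantRing, coactionAt_formCoaction]

end Coaction

section Weights

lemma coeff_aeval_C_mul_X {σ R : Type*} [CommSemiring R] (c : σ → R) (p : MvPolynomial σ R)
    (m : σ →₀ ℕ) :
    coeff m (aeval (fun i => C (c i) * X i) p) = (m.prod fun i e => c i ^ e) * coeff m p := by
  classical
  induction p using MvPolynomial.induction_on' with
  | monomial a r =>
    have aeval_monomial_eq : aeval (fun i => C (c i) * X i) (monomial a r) =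
        C (a.prod fun i e => c i ^ e) * monomial a r := by
      rw [aeval_monomial, algebraMap_eq, monomial_eq (s := a)]
      simp only [mul_pow, Finsupp.prod_mul, ← map_pow, ← map_finsuppProd]
      ring
    rw [aeval_monomial_eq, coeff_C_mul, coeff_monomial]
    split_ifs with h
    · rw [h]
    · simp
  | add p q hp hq => simp only [map_add, coeff_add, hp, hq, mul_add]

variable {k : Type*} [Field k] {d : ℕ}

lemma actHom_diagonal (s t : k) :
    actHom k d (Matrix.diagonal ![s, t]) =
      aeval fun i : Fin (d + 1) => C (s ^ (i : ℕ) * t ^ (d - i)) * X i := by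
  ext1 i
  have substGen_diagonal : substGen k d (Matrix.diagonal ![s, t]) =
      ∑ j : Fin (d + 1),
        monomial (binaryExponent d j) (C (s ^ (j : ℕ) * t ^ (d - j)) * X j) := by
    simp only [substGen, genForm, monomial_binaryExponent, map_sum]
    refine Finset.sum_congr rfl fun j _ => ?_
    simp [mul_pow]
    ring
  rw [actHom_X, substGen_diagonal, coeff_sum_monomial_binaryExponent, aeval_X]

lemma prod_pow_mul_pow_eq_pow_weight {σ R : Type*} [CommSemiring R] (s t : R) (u v : σ → ℕ)
    (m : σ →₀ ℕ) :
    (m.prod fun i e => (s ^ u i * t ^ v i) ^ e) =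
      s ^ Finsupp.weight u m * t ^ Finsupp.weight v m := by
  simp only [Finsupp.weight_apply, Finsupp.prod, Finsupp.sum, mul_pow, Finset.prod_mul_distrib,
    ← pow_mul, Finset.prod_pow_eq_pow_sum, smul_eq_mul, mul_comm]

lemma coeff_actHom_diagonal (s t : k) (p : MvPolynomial (Fin (d + 1)) k) (m : Fin (d + 1) →₀ ℕ) :
    coeff m (actHom k d (Matrix.diagonal ![s, t]) p) =
      s ^ Finsupp.weight (fun i : Fin (d + 1) => (i : ℕ)) m *
        t ^ Finsupp.weight (fun i : Fin (d + 1) => d - (i : ℕ)) m * coeff m p := by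
  rw [actHom_diagonal, coeff_aeval_C_mul_X, prod_pow_mul_pow_eq_pow_weight]

lemma weight_add_weight_sub (m : Fin (d + 1) →₀ ℕ) :
    Finsupp.weight (fun i : Fin (d + 1) => (i : ℕ)) m +
      Finsupp.weight (fun i : Fin (d + 1) => d - (i : ℕ)) m = d * m.degree := by
  simp only [Finsupp.weight_eq_sum, Finsupp.degree_eq_sum, ← Finset.sum_add_distrib,
    Finset.mul_sum, smul_eq_mul, ← mul_add]
  refine Finset.sum_congr rfl fun i _ => ?_
  rw [Nat.add_sub_cancel' (Nat.lt_succ_iff.1 i.2), mul_comm]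

-- The torus element `diag(2, 2⁻¹)` multiplies the monomial `A ^ m` by `2` to the power
-- `∑ i mᵢ - ∑ (d - i) mᵢ`.
lemma isWeightedHomogeneous_of_mem_invariantRing [CharZero k] {p : MvPolynomial (Fin (d + 1)) k}
    (hp : p ∈ invariantRing k d) {n : ℕ} (hpn : p.IsHomogeneous n) :
    p.IsWeightedHomogeneous (fun i : Fin (d + 1) => (i : ℕ)) (d * n / 2) := by
  intro m hm
  have det_eq_one : (Matrix.diagonal ![(2 : k), 2⁻¹]).det = 1 := by simp
  have coeff_eq := congr_arg (coeff m) ((mem_invariantRing k d).1 hp _ det_eq_one)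
  rw [coeff_actHom_diagonal, mul_eq_right₀ hm, inv_pow,
    mul_inv_eq_one₀ (pow_ne_zero _ two_ne_zero)] at coeff_eq
  have weight_eq := Nat.pow_right_injective le_rfl (by exact_mod_cast coeff_eq)
  have degree_eq : m.degree = n := by
    by_contra hmn
    exact hm (hpn.coeff_eq_zero hmn)
  have weight_add := weight_add_weight_sub m
  rw [degree_eq, ← weight_eq] at weight_add
  lia

lemma actHom_diagonal_one_of_isWeightedHomogeneous {p : MvPolynomial (Fin (d + 1)) k} {w : ℕ}
    (hp : p.IsWeightedHomogeneous (fun i : Fin (d + 1) => (i : ℕ)) w) (t : k) :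
    actHom k d (Matrix.diagonal ![t, 1]) p = C (t ^ w) * p := by
  ext m
  rw [coeff_actHom_diagonal, coeff_C_mul, one_pow, mul_one]
  by_cases hm : coeff m p = 0
  · rw [hm, mul_zero, mul_zero]
  · rw [hp hm]

lemma actHom_of_isWeightedHomogeneous {p : MvPolynomial (Fin (d + 1)) k}
    (hp : p ∈ invariantRing k d) {w : ℕ}
    (hpw : p.IsWeightedHomogeneous (fun i : Fin (d + 1) => (i : ℕ)) w)
    {g : Matrix (Fin 2) (Fin 2) k} (hg : g.det ≠ 0) :
    actHom k d g p = C (g.det ^ w) * p := by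
  set h := g * Matrix.diagonal ![g.det⁻¹, 1]
  have hh : h.det = 1 := by simp [h, Matrix.det_mul, hg]
  have g_eq : g = h * Matrix.diagonal ![g.det, 1] := by
    have diagonal_mul : Matrix.diagonal ![g.det⁻¹, 1] * Matrix.diagonal ![g.det, 1] = 1 := by
      rw [Matrix.diagonal_mul_diagonal, ← Matrix.diagonal_one]
      congr 1
      ext1 i
      fin_cases i <;> simp [hg]
    rw [mul_assoc, diagonal_mul, mul_one]
  calc actHom k d g p = actHom k d h (actHom k d (Matrix.diagonal ![g.det, 1]) p) := by
        rw [← AlgHom.comp_apply, actHom_comp_actHom, ← g_eq]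
    _ = C (g.det ^ w) * p := by
        rw [actHom_diagonal_one_of_isWeightedHomogeneous hpw, map_mul,
          (mem_invariantRing k d).1 hp h hh]
        congr 1
        exact (actHom k d h).commutes _

lemma formCoaction_of_mem_invariantRing [CharZero k] {p : MvPolynomial (Fin (d + 1)) k}
    (hp : p ∈ invariantRing k d) {n : ℕ} (hpn : p.IsHomogeneous n) :
    formCoaction k d p = genericDet (Fin 2) _ ^ (d * n / 2) * C p := by
  -- Multiplying by the determinant makes both sides agree at singular matrices as well.
  refine mul_left_cancel₀ (Matrix.det_mvPolynomialX_ne_zero (Fin 2) _)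
    (eq_of_evalMatrix_map_eq (algebraMap k (MvPolynomial (Fin (d + 1)) k)).injective fun g => ?_)
  have evalMatrix_formCoaction : evalMatrix (g.map (algebraMap k _)) (formCoaction k d p) =
      actHom k d g p := DFunLike.congr_fun (coactionAt_formCoaction k d g) p
  have det_map : (g.map (algebraMap k (MvPolynomial (Fin (d + 1)) k))).det = C g.det :=
    (RingHom.map_det _ g).symm
  rw [map_mul, map_mul, map_mul, map_pow, evalMatrix_genericDet, evalMatrix_C,
    evalMatrix_formCoaction, det_map]
  by_cases hg : g.det = 0
  · simp [hg]
  · rw [actHom_of_isWeightedHomogeneous hp (isWeightedHomogeneous_of_mem_invariantRing hp hpn) hg,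
      map_pow]

end Weights

lemma homogeneousSubmodule_zero_le_one (σ R : Type*) [CommSemiring R] :
    homogeneousSubmodule σ R 0 ≤ 1 := fun p hp => by
  rw [← homogeneousComponent_eq_self hp, homogeneousComponent_zero]
  exact Submodule.algebraMap_mem _

attribute [local instance] MvPolynomial.gradedAlgebra in
theorem invariantRing_fg_general (k : Type*) [Field k] [CharZero k] (d : ℕ) :
    (invariantRing k d).FG := by
  have semi_invariant : ∀ f ∈ invariantRing k d,
      SetLike.IsHomogeneousElem (homogeneousSubmodule (Fin (d + 1)) k) f →
        ∃ w, formCoaction k d f = genericDet (Fin 2) _ ^ w * C f := by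
    rintro f hf ⟨n, hfn⟩
    exact ⟨d * n / 2, formCoaction_of_mem_invariantRing hf hfn⟩
  refine fg_of_mem_span_of_mem_ideal_span (invariantRing_isHomogeneous k d)
    (homogeneousSubmodule_zero_le_one _ k) fun t ht p hp hpn hpt => ?_
  rw [← slInvariants_formCoaction]
  exact mem_span_slInvariants_of_mem_ideal_span (isMatrixAction_formCoaction k d)
    (fun f hf => semi_invariant f (ht hf).1 (ht hf).2) (semi_invariant p hp hpn) hpt

/-- **Hilbert's finiteness theorem.** Over an algebraically closed field of characteristic 0,
the ring `R_d` of `SL₂(k)`-invariants in `k[A_0, ..., A_d]` is finitely generated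
as a `k`-algebra. -/
theorem invariantRing_fg (k : Type*) [Field k] [IsAlgClosed k] [CharZero k] (d : ℕ) :
    (invariantRing k d).FG :=
  invariantRing_fg_general k d
end
end

section
/- Let f be a binary octavic over an algebraically closed field k with char k ∉ {2,3,5,7}. If J_2(f) = J_3(f) = J_4(f) = J_5(f) = J_6(f) = J_7(f) = 0, then f has a multiple root, i.e. f(X,Y) is divisible by the square of a nonzero linear form in k[X,Y]. -/
noncomputable section

open MvPolynomial


variable {k : Type*} [Field k]

/-- char k not in {2,3,5,7} -/
def CharOK (k : Type*) [Field k] : Prop :=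
  ringChar k ≠ 2 ∧ ringChar k ≠ 3 ∧ ringChar k ≠ 5 ∧ ringChar k ≠ 7

/-- the r-th transvectant of binary forms f, g of degrees n and m -/
def transvectant (n m r : ℕ) (f g : MvPolynomial (Fin 2) k) : MvPolynomial (Fin 2) k :=
  C ((((m - r).factorial * (n - r).factorial : ℕ) : k) /
      ((n.factorial * m.factorial : ℕ) : k)) *
    ∑ j ∈ Finset.range (r + 1),
      C ((-1 : k) ^ j * (r.choose j : k)) *
        ((fun p => pderiv (0 : Fin 2) p)^[r - j] ((fun p => pderiv (1 : Fin 2) p)^[j] f)) *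
        ((fun p => pderiv (0 : Fin 2) p)^[j] ((fun p => pderiv (1 : Fin 2) p)^[r - j] g))

/-- the binary octavic with coefficient vector a -/
def octForm (a : Fin 9 → k) : MvPolynomial (Fin 2) k :=
  ∑ i : Fin 9, C (a i) * X 0 ^ (i : ℕ) * X 1 ^ (8 - (i : ℕ))

def covg (a : Fin 9 → k) := transvectant 8 8 4 (octForm a) (octForm a)
def covk (a : Fin 9 → k) := transvectant 8 8 6 (octForm a) (octForm a)
def covh (a : Fin 9 → k) := transvectant 4 4 2 (covk a) (covk a)
def covm (a : Fin 9 → k) := transvectant 8 4 4 (octForm a) (covk a)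
def covn (a : Fin 9 → k) := transvectant 8 4 4 (octForm a) (covh a)
def covp (a : Fin 9 → k) := transvectant 8 4 4 (covg a) (covk a)
def covq (a : Fin 9 → k) := transvectant 8 4 4 (covg a) (covh a)

def J2 (a : Fin 9 → k) : k :=
  (2 ^ 2 * 5 * 7 : k) * constantCoeff (transvectant 8 8 8 (octForm a) (octForm a))
def J3 (a : Fin 9 → k) : k :=
  ((2 ^ 4 * 5 ^ 2 * 7 ^ 3 : k) / 3) * constantCoeff (transvectant 8 8 8 (octForm a) (covg a))
def J4 (a : Fin 9 → k) : k :=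
  (2 ^ 9 * 3 * 7 ^ 4 : k) * constantCoeff (transvectant 4 4 4 (covk a) (covk a))
def J5 (a : Fin 9 → k) : k :=
  (2 ^ 9 * 5 * 7 ^ 5 : k) * constantCoeff (transvectant 4 4 4 (covm a) (covk a))
def J6 (a : Fin 9 → k) : k :=
  (2 ^ 14 * 3 ^ 2 * 7 ^ 6 : k) * constantCoeff (transvectant 4 4 4 (covk a) (covh a))
def J7 (a : Fin 9 → k) : k :=
  (2 ^ 14 * 3 * 5 * 7 ^ 7 : k) * constantCoeff (transvectant 4 4 4 (covm a) (covh a))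
def J8 (a : Fin 9 → k) : k :=
  (2 ^ 17 * 3 * 5 ^ 2 * 7 ^ 9 : k) * constantCoeff (transvectant 4 4 4 (covp a) (covh a))
def J9 (a : Fin 9 → k) : k :=
  (2 ^ 19 * 3 ^ 2 * 5 * 7 ^ 9 : k) * constantCoeff (transvectant 4 4 4 (covn a) (covh a))
def J10 (a : Fin 9 → k) : k :=
  (2 ^ 22 * 3 ^ 2 * 5 ^ 2 * 7 ^ 11 : k) * constantCoeff (transvectant 4 4 4 (covq a) (covh a))

def Jinv : ℕ → (Fin 9 → k) → k
  | 2 => J2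
  | 3 => J3
  | 4 => J4
  | 5 => J5
  | 6 => J6
  | 7 => J7
  | 8 => J8
  | 9 => J9
  | 10 => J10
  | _ => fun _ => 0

/-- action of a 2x2 matrix on binary forms by substitution (X,Y) ↦ (aX+bY, cX+dY) -/
def substForm (g : Matrix (Fin 2) (Fin 2) k) (p : MvPolynomial (Fin 2) k) :
    MvPolynomial (Fin 2) k :=
  aeval (fun i : Fin 2 => C (g i 0) * X 0 + C (g i 1) * X 1) p

/-- coefficients of the transformed octavic -/
def octAct (g : Matrix (Fin 2) (Fin 2) k) (a : Fin 9 → k) : Fin 9 → k := fun i =>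
  coeff (Finsupp.single (0 : Fin 2) (i : ℕ) + Finsupp.single (1 : Fin 2) (8 - (i : ℕ)))
    (substForm g (octForm a))

/-! Write `f = ∑ (8 choose i) bᵢ Xⁱ Y⁸⁻ⁱ`, and `κᵢ` for the coefficients of `κ`, normalised in the
same way. The two basic invariants of the quartic `κ` are `J₄` and `J₆` up to scalars; both vanish,
so `κ` has a triple root. Covariants are compatible with substitutions, so this root may be moved
to `X = 0`, after which only `κ₃` and `κ₄` can be nonzero.

If `κ₃ ≠ 0`, a shear `Y ↦ Y + t X` makes `κ₄ = 0`; then `J₇` and `J₅` force `b₁ = b₂ = 0`, and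
together with `J₂ = 0` the vanishing of `κ₀, κ₁, κ₂, κ₄` shows that `X²` or `Y²` divides `f`.

If `κ₃ = 0`, then `J₅` forces `b₀ = 0` or `κ = 0`. Up to a shear, the coefficient following the
leading one vanishes, and the equations `κᵢ = 0` express the last coefficients by the first ones.
Together with `J₂ = 0`, the equations that remain reduce to cusps `x³ = y²` or split off linear
factors; in each case their solutions are parametrised by a root of `f` of multiplicity six. -/

open scoped TensorProduct

namespace BinaryForm

section Substitution

variable (g h : Matrix (Fin 2) (Fin 2) k) (p q : MvPolynomial (Fin 2) k)

/-- The substitution `substForm g`, bundled as an algebra endomorphism. -/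
def substAlgHom : MvPolynomial (Fin 2) k →ₐ[k] MvPolynomial (Fin 2) k :=
  aeval fun i => C (g i 0) * X 0 + C (g i 1) * X 1

lemma substForm_eq_substAlgHom : substForm g p = substAlgHom g p := rfl

lemma substAlgHom_C (c : k) : substAlgHom g (C c) = C c := by
  simp [substAlgHom, algebraMap_eq]

lemma substAlgHom_X (i : Fin 2) : substAlgHom g (X i) = C (g i 0) * X 0 + C (g i 1) * X 1 :=
  aeval_X _ _

lemma substForm_C_mul (c : k) : substForm g (C c * p) = C c * substForm g p := by
  simp only [substForm_eq_substAlgHom, map_mul, substAlgHom_C]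

lemma substForm_substForm : substForm h (substForm g p) = substForm (g * h) p := by
  suffices (substAlgHom h).comp (substAlgHom g) = substAlgHom (g * h) from DFunLike.congr_fun this p
  ext1 i
  simp only [AlgHom.comp_apply, substAlgHom_X, map_add, map_mul, substAlgHom_C, Matrix.mul_apply,
    Fin.sum_univ_two]
  ring

lemma substForm_one : substForm 1 p = p := by
  suffices substAlgHom (1 : Matrix (Fin 2) (Fin 2) k) = AlgHom.id k _ from
    DFunLike.congr_fun this p
  ext1 i
  fin_cases i <;> simp [substAlgHom_X]

lemma constantCoeff_substForm : constantCoeff (substForm g p) = constantCoeff p := by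
  rw [substForm_eq_substAlgHom]
  induction p using MvPolynomial.induction_on with
  | C c => rw [substAlgHom_C]
  | add p q hp hq => simp only [map_add, hp, hq]
  | mul_X p i _ => simp [substAlgHom_X]

lemma isHomogeneous_substForm {p} {n : ℕ} (hp : p.IsHomogeneous n) :
    (substForm g p).IsHomogeneous n := by
  simpa [substForm] using hp.aeval _ fun i =>
    (isHomogeneous_C_mul_X (g i 0) 0).add (isHomogeneous_C_mul_X (g i 1) 1)

lemma pderiv_substForm (i : Fin 2) :
    pderiv i (substForm g p) =
      C (g 0 i) * substForm g (pderiv 0 p) + C (g 1 i) * substForm g (pderiv 1 p) := by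
  simp only [substForm_eq_substAlgHom]
  induction p using MvPolynomial.induction_on with
  | C c => simp
  | add p q hp hq => simp only [map_add, hp, hq]; ring
  | mul_X p j hp =>
    simp only [map_mul, pderiv_mul, hp, substAlgHom_X, map_add, pderiv_X]
    fin_cases i <;> fin_cases j <;>
    simp only [Fin.zero_eta, Fin.mk_one, derivation_C, Pi.single_eq_same, Pi.single_eq_of_ne, ne_eq,
      zero_ne_one, one_ne_zero, not_false_eq_true, map_zero, map_one] <;>
    ring

end Substitution

section Omega

lemma pderiv_pderiv_comm {R σ : Type*} [CommRing R] (i j : σ) (p : MvPolynomial σ R) :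
    pderiv i (pderiv j p) = pderiv j (pderiv i p) := by
  classical
  have h : ⁅pderiv (R := R) i, pderiv (R := R) j⁆ = 0 := by
    ext1 l
    rw [Derivation.commutator_apply, pderiv_X, pderiv_X, Pi.single_apply, Pi.single_apply]
    split_ifs <;> simp
  rw [← sub_eq_zero, ← Derivation.commutator_apply, h, Derivation.zero_apply]

variable (n m r : ℕ) (g : Matrix (Fin 2) (Fin 2) k) (p q : MvPolynomial (Fin 2) k)
  (t : MvPolynomial (Fin 2) k ⊗[k] MvPolynomial (Fin 2) k)

/-- The operator `∂ᵢ ⊗ ∂ⱼ` on pairs of binary forms. -/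
def pderivTensor (i j : Fin 2) :
    Module.End k (MvPolynomial (Fin 2) k ⊗[k] MvPolynomial (Fin 2) k) :=
  TensorProduct.map (pderiv i).toLinearMap (pderiv j).toLinearMap

/-- Cayley's omega operator `∂/∂X ⊗ ∂/∂Y - ∂/∂Y ⊗ ∂/∂X`, whose powers give the transvectants. -/
def omega : Module.End k (MvPolynomial (Fin 2) k ⊗[k] MvPolynomial (Fin 2) k) :=
  pderivTensor 0 1 - pderivTensor 1 0

/-- Simultaneous substitution in both forms of a pair. -/
def substTensor : Module.End k (MvPolynomial (Fin 2) k ⊗[k] MvPolynomial (Fin 2) k) :=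
  TensorProduct.map (substAlgHom g).toLinearMap (substAlgHom g).toLinearMap

lemma substTensor_tmul : substTensor g (p ⊗ₜ q) = substForm g p ⊗ₜ substForm g q := rfl

lemma pderivTensor_tmul (i j : Fin 2) :
    pderivTensor i j (p ⊗ₜ q) = pderiv i p ⊗ₜ[k] pderiv j q := rfl

lemma pderivTensor_pow_tmul (i j : Fin 2) :
    (pderivTensor i j ^ r) (p ⊗ₜ q) = (pderiv i)^[r] p ⊗ₜ[k] (pderiv j)^[r] q := by
  induction r generalizing p q with
  | zero => rfl
  | succ r ih => rw [pow_succ, Module.End.mul_apply, pderivTensor_tmul, ih]; rfl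

lemma commute_pderivTensor : Commute (pderivTensor (k := k) 0 1) (pderivTensor 1 0) :=
  TensorProduct.ext' fun p q => by
    simp only [Module.End.mul_apply, pderivTensor_tmul]
    rw [pderiv_pderiv_comm 1 0 p, pderiv_pderiv_comm 1 0 q]

lemma omega_pow_tmul :
    (omega ^ r) (p ⊗ₜ[k] q) = ∑ j ∈ Finset.range (r + 1), ((-1 : k) ^ j * (r.choose j : k)) •
      ((pderiv 0)^[r - j] ((pderiv 1)^[j] p) ⊗ₜ (pderiv 0)^[j] ((pderiv 1)^[r - j] q)) := by
  have hcomm : Commute ((-1 : k) • pderivTensor (k := k) 1 0) (pderivTensor 0 1) :=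
    commute_pderivTensor.symm.smul_left _
  have homega : omega (k := k) = (-1 : k) • pderivTensor 1 0 + pderivTensor 0 1 := by
    rw [omega]; module
  rw [homega, hcomm.add_pow, LinearMap.sum_apply]
  refine Finset.sum_congr rfl fun j _ => ?_
  rw [smul_pow, smul_mul_assoc, smul_mul_assoc, ← nsmul_eq_mul', ← Nat.cast_smul_eq_nsmul k,
    smul_smul]
  have hpderiv : Function.Commute (pderiv (R := k) (0 : Fin 2)) (pderiv 1) :=
    pderiv_pderiv_comm 0 1
  simp only [LinearMap.smul_apply, Module.End.mul_apply, pderivTensor_pow_tmul,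
    (hpderiv.iterate_iterate (r - j) j).eq p]

lemma transvectant_eq_omega_pow :
    transvectant n m r p q =
      C ((((m - r).factorial * (n - r).factorial : ℕ) : k) /
        ((n.factorial * m.factorial : ℕ) : k)) *
      LinearMap.mul' k _ ((omega ^ r) (p ⊗ₜ q)) := by
  simp only [transvectant, omega_pow_tmul, map_sum, map_smul, LinearMap.mul'_apply, smul_eq_C_mul,
    mul_assoc]

lemma omega_mul_substTensor : omega * substTensor g = g.det • (substTensor g * omega) := by
  refine TensorProduct.ext' fun p q => ?_
  simp only [omega, Module.End.mul_apply, LinearMap.sub_apply, LinearMap.smul_apply, map_sub,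
    pderivTensor_tmul, substTensor_tmul, pderiv_substForm, ← smul_eq_C_mul, Matrix.det_fin_two,
    TensorProduct.tmul_add, TensorProduct.add_tmul, ← TensorProduct.smul_tmul',
    TensorProduct.tmul_smul]
  module

lemma omega_pow_mul_substTensor :
    omega ^ r * substTensor g = g.det ^ r • (substTensor g * omega ^ r) := by
  induction r with
  | zero => simp
  | succ r ih =>
    rw [pow_succ, mul_assoc, omega_mul_substTensor, mul_smul_comm, ← mul_assoc, ih, smul_mul_assoc,
      smul_smul, mul_assoc, pow_succ']

lemma mul'_substTensor :
    LinearMap.mul' k _ (substTensor g t) = substForm g (LinearMap.mul' k _ t) := by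
  suffices LinearMap.mul' k _ ∘ₗ substTensor g = (substAlgHom g).toLinearMap ∘ₗ LinearMap.mul' k _
    from DFunLike.congr_fun this t
  exact TensorProduct.ext' fun p q => by simp [substTensor]

theorem transvectant_substForm :
    transvectant n m r (substForm g p) (substForm g q) =
      C (g.det ^ r) * substForm g (transvectant n m r p q) := by
  have h : (omega ^ r) (substForm g p ⊗ₜ substForm g q) =
      g.det ^ r • substTensor g ((omega ^ r) (p ⊗ₜ q)) :=
    DFunLike.congr_fun (omega_pow_mul_substTensor r g) (p ⊗ₜ q)
  rw [transvectant_eq_omega_pow, transvectant_eq_omega_pow, h, map_smul, mul'_substTensor,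
    substForm_C_mul, smul_eq_C_mul]
  ring

lemma transvectant_C_mul_left (c : k) :
    transvectant n m r (C c * p) q = C c * transvectant n m r p q := by
  simp only [transvectant_eq_omega_pow, ← smul_eq_C_mul, ← TensorProduct.smul_tmul', map_smul,
    smul_comm c]

lemma transvectant_C_mul_right (c : k) :
    transvectant n m r p (C c * q) = C c * transvectant n m r p q := by
  simp only [transvectant_eq_omega_pow, ← smul_eq_C_mul, TensorProduct.tmul_smul, map_smul,
    smul_comm c]

end Omega

section Factorial

variable {m n : ℕ}

lemma natCast_factorial_ne_zero_of_le (hmn : m ≤ n) (hn : (n.factorial : k) ≠ 0) :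
    (m.factorial : k) ≠ 0 := by
  obtain ⟨d, hd⟩ := Nat.factorial_dvd_factorial hmn
  rw [hd, Nat.cast_mul] at hn
  exact left_ne_zero_of_mul hn

lemma ofNat_ne_zero_of_factorial_ne_zero [n.AtLeastTwo] (hm : (m.factorial : k) ≠ 0)
    (hnm : n ≤ m) : (ofNat(n) : k) ≠ 0 := by
  obtain ⟨d, hd⟩ := Nat.dvd_factorial (Nat.zero_lt_of_ne_zero (NeZero.ne n)) hnm
  rw [hd, Nat.cast_mul] at hm
  exact mod_cast left_ne_zero_of_mul hm

lemma natCast_choose_ne_zero {i : ℕ} (hn : (n.factorial : k) ≠ 0) (hi : i ≤ n) :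
    (n.choose i : k) ≠ 0 := by
  rw [← Nat.choose_mul_factorial_mul_factorial hi, Nat.cast_mul, Nat.cast_mul] at hn
  exact left_ne_zero_of_mul (left_ne_zero_of_mul hn)

end Factorial

section BinForm

/-- The binary form `∑ (n choose i) bᵢ Xⁱ Yⁿ⁻ⁱ` of degree `n`, with binomially normalised
coefficients. Only `b 0, …, b n` matter. -/
def binForm (n : ℕ) (b : ℕ → k) : MvPolynomial (Fin 2) k :=
  ∑ i ∈ Finset.range (n + 1), C ((n.choose i : k) * b i) * X 0 ^ i * X 1 ^ (n - i)

variable (n m r : ℕ) (b c : ℕ → k)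

lemma pderiv_zero_C_mul_X_pow_mul_X_pow (a : k) (i j : ℕ) :
    pderiv 0 (C a * X 0 ^ (i + 1) * X 1 ^ j : MvPolynomial (Fin 2) k) =
      C (a * (i + 1 : ℕ)) * X 0 ^ i * X 1 ^ j := by
  simp only [pderiv_mul, pderiv_pow, pderiv_C, pderiv_X_self, pderiv_X_of_ne one_ne_zero,
    Nat.add_sub_cancel, map_mul, map_natCast]
  ring

lemma pderiv_one_C_mul_X_pow_mul_X_pow (a : k) (i j : ℕ) :
    pderiv 1 (C a * X 0 ^ i * X 1 ^ (j + 1) : MvPolynomial (Fin 2) k) =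
      C (a * (j + 1 : ℕ)) * X 0 ^ i * X 1 ^ j := by
  simp only [pderiv_mul, pderiv_pow, pderiv_C, pderiv_X_self, pderiv_X_of_ne zero_ne_one,
    Nat.add_sub_cancel, map_mul, map_natCast]
  ring

lemma pderiv_zero_binForm :
    pderiv 0 (binForm (n + 1) b) = C ((n + 1 : ℕ) : k) * binForm n fun i => b (i + 1) := by
  rw [binForm, binForm, map_sum, Finset.sum_range_succ', Finset.mul_sum]
  refine (congrArg₂ (· + ·) (Finset.sum_congr rfl fun i _ => ?_) ?_).trans (add_zero _)
  · have h : ((n + 1 : ℕ) : k) * n.choose i = (n + 1).choose (i + 1) * (i + 1 : ℕ) :=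
      mod_cast congrArg (Nat.cast (R := k)) (Nat.add_one_mul_choose_eq n i)
    rw [pderiv_zero_C_mul_X_pow_mul_X_pow, Nat.add_sub_add_right, mul_right_comm (_ : k), ← h]
    simp only [map_mul]
    ring
  · simp [pderiv_X]

lemma pderiv_one_binForm :
    pderiv 1 (binForm (n + 1) b) = C ((n + 1 : ℕ) : k) * binForm n b := by
  rw [binForm, binForm, map_sum, Finset.sum_range_succ, Finset.mul_sum]
  refine (congrArg₂ (· + ·) (Finset.sum_congr rfl fun i hi => ?_) ?_).trans (add_zero _)
  · have hi : n + 1 - i = n - i + 1 := Nat.succ_sub (Finset.mem_range_succ_iff.mp hi)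
    have h : (n.choose i : k) * (n + 1 : ℕ) = (n + 1).choose i * (n - i + 1 : ℕ) :=
      mod_cast congrArg (Nat.cast (R := k)) (hi ▸ Nat.choose_mul_succ_eq n i)
    rw [hi, pderiv_one_C_mul_X_pow_mul_X_pow, mul_right_comm (_ : k), ← h]
    simp only [map_mul]
    ring
  · simp [pderiv_X]

lemma natCast_descFactorial_mul (s : ℕ) :
    ((n + 1 + s).descFactorial s : k) * (n + 1 : ℕ) = (n + 1 + s).descFactorial (s + 1) := by
  rw [Nat.descFactorial_succ, Nat.add_sub_cancel, mul_comm, Nat.cast_mul]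

lemma iterate_pderiv_binForm {p q : ℕ} (h : p + q = r) :
    (pderiv 0)^[p] ((pderiv 1)^[q] (binForm (n + r) b)) =
      C ((n + r).descFactorial r : k) * binForm n fun i => b (i + p) := by
  subst h
  induction p generalizing n with
  | zero =>
    induction q generalizing n with
    | zero => simp
    | succ q ih =>
      have hn : n + (0 + (q + 1)) = n + 1 + q := by ring
      simp only [Function.iterate_zero_apply, zero_add] at ih
      rw [Function.iterate_zero_apply, Function.iterate_succ_apply', hn, ih, pderiv_C_mul,
        pderiv_one_binForm, zero_add, ← natCast_descFactorial_mul, map_mul, mul_assoc]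
  | succ p ih =>
    have hn : n + (p + 1 + q) = n + 1 + (p + q) := by ring
    rw [Function.iterate_succ_apply', hn, ih, pderiv_C_mul, pderiv_zero_binForm,
      add_right_comm p 1 q, ← natCast_descFactorial_mul, map_mul, mul_assoc]
    simp only [add_assoc, add_comm 1 p]

theorem transvectant_binForm (hn : ((n + r).factorial : k) ≠ 0)
    (hm : ((m + r).factorial : k) ≠ 0) :
    transvectant (n + r) (m + r) r (binForm (n + r) b) (binForm (m + r) c) =
      ∑ j ∈ Finset.range (r + 1), C ((-1 : k) ^ j * (r.choose j : k)) *
        binForm n (fun i => b (i + (r - j))) * binForm m (fun i => c (i + j)) := by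
  have hconst : C ((((m + r - r).factorial * (n + r - r).factorial : ℕ) : k) /
      (((n + r).factorial * (m + r).factorial : ℕ) : k)) *
      (C ((n + r).descFactorial r : k) * C ((m + r).descFactorial r : k)) =
      (1 : MvPolynomial (Fin 2) k) := by
    rw [← map_mul, ← map_mul, ← C_1]
    congr 1
    rw [← Nat.factorial_mul_descFactorial (Nat.le_add_left r n), Nat.cast_mul] at hn
    rw [← Nat.factorial_mul_descFactorial (Nat.le_add_left r m), Nat.cast_mul] at hm
    rw [← Nat.factorial_mul_descFactorial (Nat.le_add_left r n),
      ← Nat.factorial_mul_descFactorial (Nat.le_add_left r m)]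
    push_cast
    rw [div_mul_eq_mul_div, div_eq_one_iff_eq (mul_ne_zero hn hm)]
    ring
  rw [transvectant, Finset.mul_sum]
  refine Finset.sum_congr rfl fun j hj => ?_
  have hj : j ≤ r := Finset.mem_range_succ_iff.mp hj
  rw [iterate_pderiv_binForm n r b (Nat.sub_add_cancel hj),
    iterate_pderiv_binForm m r c (Nat.add_sub_cancel' hj)]
  linear_combination C ((-1 : k) ^ j * (r.choose j : k)) *
        binForm n (fun i => b (i + (r - j))) * binForm m (fun i => c (i + j)) * hconst

/-- The coefficients of the full transvectant `(f, g)ʳ` of a form `f` of degree at least `r` with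
coefficients `b` and a form `g` of degree `r` with coefficients `c`. -/
def contraction (i : ℕ) : k :=
  ∑ j ∈ Finset.range (r + 1), (-1) ^ j * (r.choose j : k) * b (i + (r - j)) * c j

lemma binForm_zero_left : binForm 0 b = C (b 0) := by
  simp [binForm]

lemma transvectant_binForm_eq_binForm_contraction (hn : ((n + r).factorial : k) ≠ 0) :
    transvectant (n + r) r r (binForm (n + r) b) (binForm r c) = binForm n (contraction r b c) := by
  have hr : ((0 + r).factorial : k) ≠ 0 := natCast_factorial_ne_zero_of_le (by omega) hn
  have h := transvectant_binForm n 0 r b c hn hr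
  simp only [zero_add, binForm_zero_left] at h
  rw [h]
  simp only [binForm, contraction, Finset.mul_sum, Finset.sum_mul, map_sum]
  rw [Finset.sum_comm]
  refine Finset.sum_congr rfl fun i _ => Finset.sum_congr rfl fun j _ => ?_
  simp only [map_mul]
  ring

end BinForm

section Coefficients

variable (n : ℕ) (b c : ℕ → k)

lemma binForm_eq_sum_monomial : binForm n b = ∑ i ∈ Finset.range (n + 1),
    monomial (Finsupp.single 0 i + Finsupp.single 1 (n - i)) ((n.choose i : k) * b i) :=
  Finset.sum_congr rfl fun i _ => by
    rw [C_mul_X_pow_eq_monomial, X_pow_eq_monomial, monomial_mul, mul_one]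

lemma isHomogeneous_binForm : (binForm n b).IsHomogeneous n := by
  rw [binForm_eq_sum_monomial]
  refine IsHomogeneous.sum _ _ _ fun i hi => isHomogeneous_monomial _ ?_
  rw [map_add, Finsupp.degree_single, Finsupp.degree_single,
    Nat.add_sub_cancel' (Finset.mem_range_succ_iff.mp hi)]

variable {n}

lemma coeff_binForm {i : ℕ} (hi : i ≤ n) :
    coeff (Finsupp.single 0 i + Finsupp.single 1 (n - i)) (binForm n b) =
      (n.choose i : k) * b i := by
  rw [binForm_eq_sum_monomial, coeff_sum, Finset.sum_eq_single i, coeff_monomial, if_pos rfl]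
  · intro j _ hji
    rw [coeff_monomial, if_neg]
    exact fun h => hji (by simpa using DFunLike.congr_fun h 0)
  · exact fun h => absurd (Finset.mem_range_succ_iff.mpr hi) h

variable {b c}

lemma eq_of_binForm_eq_binForm (hn : (n.factorial : k) ≠ 0) (h : binForm n b = binForm n c) {i : ℕ}
    (hi : i ≤ n) : b i = c i := by
  refine mul_left_cancel₀ (natCast_choose_ne_zero hn hi) ?_
  rw [← coeff_binForm b hi, h, coeff_binForm c hi]

lemma exists_eq_binForm (hn : (n.factorial : k) ≠ 0) {p : MvPolynomial (Fin 2) k}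
    (hp : p.IsHomogeneous n) : ∃ b, p = binForm n b := by
  refine ⟨fun i => coeff (Finsupp.single 0 i + Finsupp.single 1 (n - i)) p / n.choose i, ?_⟩
  ext d
  by_cases hd : d.degree = n
  · have hdsum : d 0 + d 1 = n := by
      rw [← hd, Finsupp.degree_eq_sum, Fin.sum_univ_two]
    have hd01 : d = Finsupp.single 0 (d 0) + Finsupp.single 1 (n - d 0) := by
      ext i
      fin_cases i
      · simp
      · simpa using Nat.eq_sub_of_add_eq' hdsum
    have hd0 : d 0 ≤ n := by omega
    rw [hd01, coeff_binForm _ hd0, ← hd01, mul_div_cancel₀ _ (natCast_choose_ne_zero hn hd0)]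
  · rw [hp.coeff_eq_zero hd, (isHomogeneous_binForm n _).coeff_eq_zero hd]

end Coefficients

section Shear

variable (n : ℕ) (t : k) (b : ℕ → k)

/-- The coefficients of the form obtained from `binForm n b` by the shear `Y ↦ Y + t X`. -/
def shear (i : ℕ) : k :=
  ∑ l ∈ Finset.range (i + 1), (i.choose l : k) * t ^ (i - l) * b l

lemma substForm_shear_binForm :
    substForm !![1, 0; t, 1] (binForm n b) = binForm n (shear t b) := by
  let term (l j : ℕ) : MvPolynomial (Fin 2) k :=
    C (n.choose (l + j) * ((l + j).choose l * t ^ j * b l)) * X 0 ^ (l + j) * X 1 ^ (n - (l + j))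
  have hX : substAlgHom !![1, 0; t, 1] (X 0) = X 0 := by simp [substAlgHom_X]
  have hY : substAlgHom !![1, 0; t, 1] (X 1) = C t * X 0 + X 1 := by simp [substAlgHom_X]
  have hleft (l : ℕ) (hl : l ∈ Finset.range (n + 1)) :
      substAlgHom !![1, 0; t, 1] (C (n.choose l * b l) * X 0 ^ l * X 1 ^ (n - l)) =
        ∑ j ∈ Finset.range (n + 1 - l), term l j := by
    simp only [Nat.succ_sub (Finset.mem_range_succ_iff.mp hl), map_mul, map_pow, substAlgHom_C,
      hX, hY, add_pow, Finset.mul_sum]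
    refine Finset.sum_congr rfl fun j _ => ?_
    have hchoose : (n.choose (l + j) : MvPolynomial (Fin 2) k) * (l + j).choose l =
        n.choose l * (n - l).choose j := by
      rw [← Nat.cast_mul, Nat.choose_mul (Nat.le_add_right l j), Nat.add_sub_cancel_left,
        Nat.cast_mul]
    simp only [term, map_mul, map_pow, map_natCast, Nat.sub_sub]
    linear_combination -C (b l) * C t ^ j * X 0 ^ (l + j) * X 1 ^ (n - (l + j)) * hchoose
  have hright (i : ℕ) : C (n.choose i * shear t b i) * X 0 ^ i * X 1 ^ (n - i) =
      ∑ l ∈ Finset.range (i + 1), term l (i - l) := by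
    simp only [shear, Finset.mul_sum, Finset.sum_mul, map_sum]
    refine Finset.sum_congr rfl fun l hl => ?_
    simp only [term, Nat.add_sub_cancel' (Finset.mem_range_succ_iff.mp hl)]
  simp only [binForm, substForm_eq_substAlgHom, map_sum, hright, Finset.sum_congr rfl hleft,
    Finset.sum_range_diag_flip]

variable {t b} {i : ℕ}

lemma shear_eq_of_forall_lt (h : ∀ j < i, b j = 0) : shear t b i = b i := by
  rw [shear, Finset.sum_range_succ, Finset.sum_eq_zero fun j hj => by
    rw [h j (Finset.mem_range.mp hj), mul_zero]]
  simp

lemma shear_succ_eq_of_forall_lt (h : ∀ j < i, b j = 0) :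
    shear t b (i + 1) = b (i + 1) + (i + 1 : ℕ) * t * b i := by
  rw [shear, Finset.sum_range_succ, Finset.sum_range_succ, Finset.sum_eq_zero fun j hj => by
    rw [h j (Finset.mem_range.mp hj), mul_zero]]
  simp [add_comm]

lemma det_shear : (!![1, 0; t, 1] : Matrix (Fin 2) (Fin 2) k).det = 1 := by
  simp [Matrix.det_fin_two]

end Shear

section MultipleRoot

variable {r : ℕ} {f : MvPolynomial (Fin 2) k}

/-- `f` has a root of multiplicity at least `r` in the projective line over `k`: it is divisible by
the `r`-th power of a nonzero linear form. -/
def HasRootOfMultiplicity (r : ℕ) (f : MvPolynomial (Fin 2) k) : Prop :=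
  ∃ l : MvPolynomial (Fin 2) k, l.IsHomogeneous 1 ∧ l ≠ 0 ∧ l ^ r ∣ f

lemma HasRootOfMultiplicity.mono {s : ℕ} (h : HasRootOfMultiplicity r f) (hsr : s ≤ r) :
    HasRootOfMultiplicity s f :=
  let ⟨l, hl, hl0, hdvd⟩ := h
  ⟨l, hl, hl0, (pow_dvd_pow l hsr).trans hdvd⟩

lemma HasRootOfMultiplicity.of_substForm {g : Matrix (Fin 2) (Fin 2) k} (hg : g.det ≠ 0)
    (h : HasRootOfMultiplicity r (substForm g f)) : HasRootOfMultiplicity r f := by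
  have hunit : IsUnit g.det := hg.isUnit
  obtain ⟨l, hl, hl0, hdvd⟩ := h
  refine ⟨substForm g⁻¹ l, isHomogeneous_substForm _ hl, fun h => hl0 ?_, ?_⟩
  · rw [← substForm_one l, ← Matrix.nonsing_inv_mul g hunit, ← substForm_substForm, h,
      substForm_eq_substAlgHom, map_zero]
  · have := map_dvd (substAlgHom g⁻¹) hdvd
    rwa [map_pow, ← substForm_eq_substAlgHom, ← substForm_eq_substAlgHom, substForm_substForm,
      Matrix.mul_nonsing_inv g hunit, substForm_one] at this

lemma hasRootOfMultiplicity_of_X_pow_dvd {i : Fin 2} (h : X i ^ r ∣ f) :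
    HasRootOfMultiplicity r f :=
  ⟨X i, isHomogeneous_X _ i, X_ne_zero i, h⟩

lemma hasRootOfMultiplicity_of_X_one_add_pow_dvd {u : k} (h : (X 1 + C u * X 0) ^ r ∣ f) :
    HasRootOfMultiplicity r f :=
  ⟨_, (isHomogeneous_X _ 1).add (isHomogeneous_C_mul_X u 0), fun h0 => by
    simpa using congrArg (eval ![0, 1]) h0, h⟩

lemma HasRootOfMultiplicity.exists_pow_dvd (h : HasRootOfMultiplicity r f) :
    ∃ x0 y0 : k, ¬(x0 = 0 ∧ y0 = 0) ∧ (C y0 * X 0 - C x0 * X 1) ^ r ∣ f := by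
  obtain ⟨l, hl, hl0, hdvd⟩ := h
  obtain ⟨b, rfl⟩ := exists_eq_binForm (by simp) hl
  have hb : binForm 1 b = C (b 1) * X 0 - C (-b 0) * X 1 := by
    simp [binForm, Finset.sum_range_succ, add_comm]
  rw [hb] at hl0 hdvd
  refine ⟨-b 0, b 1, fun h => hl0 ?_, hdvd⟩
  rw [h.1, h.2, C_0, zero_mul, zero_mul, sub_zero]

lemma exists_substForm_eq_X_zero {l : MvPolynomial (Fin 2) k} (hl : l.IsHomogeneous 1)
    (hl0 : l ≠ 0) : ∃ g : Matrix (Fin 2) (Fin 2) k, g.det ≠ 0 ∧ substForm g l = X 0 := by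
  obtain ⟨b, rfl⟩ := exists_eq_binForm (by simp) hl
  have hb : binForm 1 b = C (b 0) * X 1 + C (b 1) * X 0 := by
    simp [binForm, Finset.sum_range_succ]
  by_cases h0 : b 0 = 0
  · have h1 : b 1 ≠ 0 := fun h1 => hl0 (by rw [hb, h0, h1, C_0]; ring)
    refine ⟨!![(b 1)⁻¹, 0; 0, 1], by simpa [Matrix.det_fin_two] using h1, ?_⟩
    rw [hb, h0, substForm_eq_substAlgHom]
    simp [substAlgHom_X, ← mul_assoc, ← C_mul, h1]
  · refine ⟨!![0, 1; (b 0)⁻¹, -(b 1) / b 0], by simpa [Matrix.det_fin_two] using h0, ?_⟩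
    rw [hb, substForm_eq_substAlgHom]
    simp [substAlgHom_X, mul_add, ← mul_assoc, ← C_mul, h0, mul_div_cancel₀]

variable {n : ℕ} {b : ℕ → k}

lemma sq_X_zero_dvd_binForm (h0 : b 0 = 0) (h1 : b 1 = 0) : X 0 ^ 2 ∣ binForm n b := by
  refine Finset.dvd_sum fun i _ => ?_
  match i with
  | 0 => simp [h0]
  | 1 => simp [h1]
  | i + 2 => exact ((pow_dvd_pow _ (Nat.le_add_left 2 i)).mul_left _).mul_right _

lemma sq_X_one_dvd_binForm (h1 : b (n + 1) = 0) (h2 : b (n + 2) = 0) :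
    X 1 ^ 2 ∣ binForm (n + 2) b := by
  rw [binForm, Finset.sum_range_succ, Finset.sum_range_succ, h1, h2]
  simp only [mul_zero, C_0, zero_mul, add_zero]
  refine Finset.dvd_sum fun i hi => (pow_dvd_pow _ ?_).mul_left _
  have := Finset.mem_range.mp hi
  omega

lemma eq_zero_of_X_zero_pow_dvd_binForm (hn : (n.factorial : k) ≠ 0) (h : X 0 ^ r ∣ binForm n b)
    {i : ℕ} (hi : i ≤ n) (hir : i < r) : b i = 0 := by
  obtain ⟨p, hp⟩ := h
  refine (mul_eq_zero.mp ?_).resolve_left (natCast_choose_ne_zero hn hi)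
  rw [← coeff_binForm b hi, hp, X_pow_eq_monomial, coeff_monomial_mul', if_neg]
  exact fun hle => hir.not_ge (by simpa using hle 0)

end MultipleRoot

section Covariants

variable (f q : MvPolynomial (Fin 2) k)

/-- The quartic covariant `κ = (f, f)⁶` of a binary octavic `f`. -/
def kappa : MvPolynomial (Fin 2) k := transvectant 8 8 6 f f

/-- The quartic covariant `m = (f, κ)⁴` of a binary octavic `f`. -/
def quarticM : MvPolynomial (Fin 2) k := transvectant 8 4 4 f (kappa f)

/-- The Hessian covariant `(q, q)²` of a binary quartic `q`. -/
def hessian : MvPolynomial (Fin 2) k := transvectant 4 4 2 q q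

/-- The invariants `J₂`, `J₄`, `J₅`, `J₆` and `J₇` of a binary octavic vanish, up to the scalar
factors in their definition. -/
structure InvariantsVanish : Prop where
  f_f : constantCoeff (transvectant 8 8 8 f f) = 0
  kappa_kappa : constantCoeff (transvectant 4 4 4 (kappa f) (kappa f)) = 0
  m_kappa : constantCoeff (transvectant 4 4 4 (quarticM f) (kappa f)) = 0
  kappa_hessian : constantCoeff (transvectant 4 4 4 (kappa f) (hessian (kappa f))) = 0
  m_hessian : constantCoeff (transvectant 4 4 4 (quarticM f) (hessian (kappa f))) = 0

variable (g : Matrix (Fin 2) (Fin 2) k) (s : k)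

lemma kappa_substForm : kappa (substForm g f) = C (g.det ^ 6) * substForm g (kappa f) :=
  transvectant_substForm 8 8 6 g f f

lemma hessian_C_mul : hessian (C s * q) = C (s ^ 2) * hessian q := by
  rw [hessian, transvectant_C_mul_left, transvectant_C_mul_right, ← mul_assoc, ← C_mul, ← sq,
    hessian]

lemma hessian_kappa_substForm :
    hessian (kappa (substForm g f)) = C (g.det ^ 14) * substForm g (hessian (kappa f)) := by
  rw [kappa_substForm, hessian_C_mul, hessian, transvectant_substForm, ← mul_assoc, ← C_mul,
    ← pow_mul, ← pow_add, hessian]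

lemma quarticM_substForm :
    quarticM (substForm g f) = C (g.det ^ 10) * substForm g (quarticM f) := by
  rw [quarticM, kappa_substForm, transvectant_C_mul_right, transvectant_substForm, ← mul_assoc,
    ← C_mul, ← pow_add, quarticM]

variable {f}

lemma invariantsVanish_substForm (h : InvariantsVanish f) : InvariantsVanish (substForm g f) := by
  have hzero (n m r : ℕ) (d e : k) (p q : MvPolynomial (Fin 2) k)
      (hpq : constantCoeff (transvectant n m r p q) = 0) :
      constantCoeff (transvectant n m r (C d * substForm g p) (C e * substForm g q)) = 0 := by
    simp only [transvectant_C_mul_left, transvectant_C_mul_right, transvectant_substForm, map_mul,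
      constantCoeff_substForm, hpq, mul_zero]
  constructor
  · simpa using hzero 8 8 8 1 1 _ _ h.f_f
  · rw [kappa_substForm]
    exact hzero _ _ _ _ _ _ _ h.kappa_kappa
  · rw [kappa_substForm, quarticM_substForm]
    exact hzero _ _ _ _ _ _ _ h.m_kappa
  · rw [hessian_kappa_substForm, kappa_substForm]
    exact hzero _ _ _ _ _ _ _ h.kappa_hessian
  · rw [hessian_kappa_substForm, quarticM_substForm]
    exact hzero _ _ _ _ _ _ _ h.m_hessian

end Covariants

section CovariantCoefficients

variable (b c : ℕ → k)

/-- The binomially normalised coefficients of the covariant `κ` of an octavic with coefficients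
`b`. -/
def kappaCoeff (b : ℕ → k) : ℕ → k
  | 0 => 2 * (b 0 * b 6 - 6 * b 1 * b 5 + 15 * b 2 * b 4 - 10 * b 3 ^ 2)
  | 1 => b 0 * b 7 - 5 * b 1 * b 6 + 9 * b 2 * b 5 - 5 * b 3 * b 4
  | 2 => (b 0 * b 8 - 2 * b 1 * b 7 - 8 * b 2 * b 6 + 34 * b 3 * b 5 - 25 * b 4 ^ 2) / 3
  | 3 => b 1 * b 8 - 5 * b 2 * b 7 + 9 * b 3 * b 6 - 5 * b 4 * b 5
  | 4 => 2 * (b 2 * b 8 - 6 * b 3 * b 7 + 15 * b 4 * b 6 - 10 * b 5 ^ 2)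
  | _ => 0

/-- The binomially normalised coefficients of the Hessian of a quartic with coefficients `c`. -/
def hessianCoeff (c : ℕ → k) : ℕ → k
  | 0 => 2 * (c 0 * c 2 - c 1 ^ 2)
  | 1 => c 0 * c 3 - c 1 * c 2
  | 2 => (c 0 * c 4 + 2 * c 1 * c 3 - 3 * c 2 ^ 2) / 3
  | 3 => c 1 * c 4 - c 2 * c 3
  | 4 => 2 * (c 2 * c 4 - c 3 ^ 2)
  | _ => 0

lemma C_inv_three_mul_three (h3 : (3 : k) ≠ 0) : C 3⁻¹ * 3 = (1 : MvPolynomial (Fin 2) k) := by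
  rw [← map_ofNat C, ← C_mul, inv_mul_cancel₀ h3, C_1]

lemma kappa_binForm (h8 : ((8 : ℕ).factorial : k) ≠ 0) :
    kappa (binForm 8 b) = binForm 4 (kappaCoeff b) := by
  refine (transvectant_binForm 2 2 6 b b h8 h8).trans ?_
  simp only [binForm, Finset.sum_range_succ, Finset.sum_range_zero, Nat.choose, kappaCoeff,
    div_eq_mul_inv, C_mul, C_add, C_sub, C_pow, C_neg, C_1, map_natCast, map_ofNat, Nat.cast_ofNat,
    Nat.reduceAdd, Nat.reduceSub, zero_add, Nat.cast_one]
  linear_combination -2 * X 0 ^ 2 * X 1 ^ 2 *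
    (C (b 0) * C (b 8) - 2 * C (b 1) * C (b 7) - 8 * C (b 2) * C (b 6) + 34 * C (b 3) * C (b 5) -
      25 * C (b 4) ^ 2) *
    C_inv_three_mul_three (ofNat_ne_zero_of_factorial_ne_zero h8 (n := 3) (by decide))

lemma hessian_binForm (h4 : ((4 : ℕ).factorial : k) ≠ 0) :
    hessian (binForm 4 c) = binForm 4 (hessianCoeff c) := by
  refine (transvectant_binForm 2 2 2 c c h4 h4).trans ?_
  simp only [binForm, Finset.sum_range_succ, Finset.sum_range_zero, Nat.choose, hessianCoeff,
    div_eq_mul_inv, C_mul, C_add, C_sub, C_pow, C_neg, C_1, map_natCast, map_ofNat, Nat.cast_ofNat,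
    Nat.reduceAdd, Nat.reduceSub, zero_add, Nat.cast_one]
  linear_combination -2 * X 0 ^ 2 * X 1 ^ 2 *
    (C (c 0) * C (c 4) + 2 * C (c 1) * C (c 3) - 3 * C (c 2) ^ 2) *
    C_inv_three_mul_three (ofNat_ne_zero_of_factorial_ne_zero h4 (n := 3) (by decide))

lemma contraction_four (i : ℕ) :
    contraction 4 b c i = b (i + 4) * c 0 - 4 * b (i + 3) * c 1 + 6 * b (i + 2) * c 2 -
      4 * b (i + 1) * c 3 + b i * c 4 := by
  simp only [contraction, Finset.sum_range_succ, Finset.sum_range_zero, Nat.choose, Nat.reduceAdd,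
    Nat.reduceSub, Nat.cast_ofNat, add_zero, Nat.cast_one]
  ring

lemma contraction_eight_self :
    contraction 8 b b 0 =
      2 * (b 0 * b 8 - 8 * b 1 * b 7 + 28 * b 2 * b 6 - 56 * b 3 * b 5 + 35 * b 4 ^ 2) := by
  simp only [contraction, Finset.sum_range_succ, Finset.sum_range_zero, Nat.choose, Nat.reduceAdd,
    Nat.reduceSub, Nat.cast_ofNat, zero_add, add_zero, Nat.cast_one]
  ring

lemma constantCoeff_transvectant_binForm {n : ℕ} (hn : (n.factorial : k) ≠ 0) :
    constantCoeff (transvectant n n n (binForm n b) (binForm n c)) = contraction n b c 0 := by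
  rw [← zero_add n] at hn
  have h := transvectant_binForm_eq_binForm_contraction 0 n b c hn
  rw [zero_add, binForm_zero_left] at h
  rw [h, constantCoeff_C]

end CovariantCoefficients

section QuarticInvariants

lemma exists_eq_sq_and_eq_cube {x y : k} (h : x ^ 3 = y ^ 2) : ∃ v, x = v ^ 2 ∧ y = v ^ 3 :=
  (pow_eq_pow_iff_of_coprime (by decide)).mp h

lemma binForm_four (c : ℕ → k) : binForm 4 c = C (c 0) * X 1 ^ 4 + 4 * C (c 1) * X 0 * X 1 ^ 3 +
    6 * C (c 2) * X 0 ^ 2 * X 1 ^ 2 + 4 * C (c 3) * X 0 ^ 3 * X 1 + C (c 4) * X 0 ^ 4 := by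
  simp only [binForm, Finset.sum_range_succ, Finset.sum_range_zero, Nat.choose, map_mul,
    map_ofNat, Nat.cast_ofNat, Nat.reduceAdd, Nat.reduceSub, zero_add, add_zero, Nat.cast_one,
    map_one]
  ring

variable {c : ℕ → k}

lemma hasRootOfMultiplicity_three_binForm_of_ne_zero (h2 : (2 : k) ≠ 0) (h0 : c 0 ≠ 0)
    (hI : c 0 * c 4 - 4 * c 1 * c 3 + 3 * c 2 ^ 2 = 0)
    (hJ : c 0 * c 2 * c 4 + 2 * c 1 * c 2 * c 3 - c 0 * c 3 ^ 2 - c 1 ^ 2 * c 4 - c 2 ^ 3 = 0) :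
    HasRootOfMultiplicity 3 (binForm 4 c) := by
  obtain ⟨a, h1⟩ : ∃ a, c 1 = c 0 * a := ⟨c 1 / c 0, by field_simp⟩
  obtain ⟨x, hx⟩ : ∃ x, c 2 = c 0 * (a ^ 2 - x) := ⟨a ^ 2 - c 2 / c 0, by field_simp; ring⟩
  obtain ⟨y, hy⟩ : ∃ y, c 3 = c 0 * (a ^ 3 - 3 * a * x + 2 * y) :=
    ⟨(c 3 / c 0 - a ^ 3 + 3 * a * x) / 2, by field_simp; ring⟩
  have h4 : c 4 = c 0 * (a ^ 4 - 6 * a ^ 2 * x + 8 * a * y - 3 * x ^ 2) := by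
    refine mul_left_cancel₀ h0 ?_
    rw [h1, hx, hy] at hI
    linear_combination hI
  have hxy : x ^ 3 = y ^ 2 := by
    refine mul_left_cancel₀ (mul_ne_zero (mul_ne_zero h2 h2) (pow_ne_zero 3 h0)) ?_
    rw [h1, hx, hy, h4] at hJ
    linear_combination hJ
  obtain ⟨v, rfl, rfl⟩ := exists_eq_sq_and_eq_cube hxy
  refine hasRootOfMultiplicity_of_X_one_add_pow_dvd (u := a - v)
    ⟨C (c 0) * (X 1 + C (a + 3 * v) * X 0), ?_⟩
  rw [binForm_four, h1, hx, hy, h4]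
  simp only [map_mul, map_add, map_sub, map_pow, map_ofNat]
  ring

lemma hasRootOfMultiplicity_three_binForm_of_eq_zero (h2 : (2 : k) ≠ 0) (h0 : c 0 = 0)
    (hI : c 0 * c 4 - 4 * c 1 * c 3 + 3 * c 2 ^ 2 = 0)
    (hJ : c 0 * c 2 * c 4 + 2 * c 1 * c 2 * c 3 - c 0 * c 3 ^ 2 - c 1 ^ 2 * c 4 - c 2 ^ 3 = 0) :
    HasRootOfMultiplicity 3 (binForm 4 c) := by
  rw [h0] at hI hJ
  by_cases h1 : c 1 = 0
  · have hc2 : c 2 = 0 := by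
      rw [h1] at hJ
      exact pow_eq_zero_iff (three_ne_zero) |>.mp (by linear_combination -hJ)
    refine hasRootOfMultiplicity_of_X_pow_dvd (i := 0) ⟨4 * C (c 3) * X 1 + C (c 4) * X 0, ?_⟩
    rw [binForm_four, h0, h1, hc2, C_0]
    ring
  · obtain ⟨t, ht⟩ : ∃ t, c 2 = -2 * t * c 1 := ⟨-c 2 / (2 * c 1), by field_simp⟩
    have hc3 : c 3 = 3 * t ^ 2 * c 1 := by
      refine mul_left_cancel₀ (mul_ne_zero (mul_ne_zero h2 h2) h1) ?_
      rw [ht] at hI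
      linear_combination -hI
    have hc4 : c 4 = -4 * t ^ 3 * c 1 := by
      refine mul_left_cancel₀ (pow_ne_zero 2 h1) ?_
      rw [ht, hc3] at hJ
      linear_combination -hJ
    refine hasRootOfMultiplicity_of_X_one_add_pow_dvd (u := -t) ⟨C (4 * c 1) * X 0, ?_⟩
    rw [binForm_four, h0, ht, hc3, hc4]
    simp only [map_mul, map_neg, map_pow, map_ofNat, map_zero]
    ring

lemma hasRootOfMultiplicity_three_of_invariants_eq_zero {q : MvPolynomial (Fin 2) k}
    (hq : q.IsHomogeneous 4) (h4 : ((4 : ℕ).factorial : k) ≠ 0)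
    (hI : constantCoeff (transvectant 4 4 4 q q) = 0)
    (hJ : constantCoeff (transvectant 4 4 4 q (hessian q)) = 0) :
    HasRootOfMultiplicity 3 q := by
  have h2 : (2 : k) ≠ 0 := ofNat_ne_zero_of_factorial_ne_zero h4 (by decide)
  have h3 : (3 : k) ≠ 0 := ofNat_ne_zero_of_factorial_ne_zero h4 (by decide)
  obtain ⟨c, rfl⟩ := exists_eq_binForm h4 hq
  rw [constantCoeff_transvectant_binForm _ _ h4, contraction_four] at hI
  rw [hessian_binForm _ h4, constantCoeff_transvectant_binForm _ _ h4, contraction_four] at hJ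
  simp only [hessianCoeff] at hJ
  replace hI : c 0 * c 4 - 4 * c 1 * c 3 + 3 * c 2 ^ 2 = 0 :=
    mul_left_cancel₀ h2 (by linear_combination hI)
  replace hJ :
      c 0 * c 2 * c 4 + 2 * c 1 * c 2 * c 3 - c 0 * c 3 ^ 2 - c 1 ^ 2 * c 4 - c 2 ^ 3 = 0 :=
    mul_left_cancel₀ (mul_ne_zero (mul_ne_zero h2 h3) h3) <| by
      field_simp at hJ
      linear_combination hJ
  by_cases h0 : c 0 = 0
  · exact hasRootOfMultiplicity_three_binForm_of_eq_zero h2 h0 hI hJ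
  · exact hasRootOfMultiplicity_three_binForm_of_ne_zero h2 h0 hI hJ

end QuarticInvariants

section SextupleRoot

/-- The relations `(f, f)⁸ = 0`, `κ₃ = 0` and `κ₄ = 0` between the coefficients
`(x, y, z, w) = (b₂, b₃, b₄, b₅)` of an octavic with `b₀ = 1` and `b₁ = 0`, after elimination of
`b₆`, `b₇`, `b₈` by means of `κ₀ = κ₁ = κ₂ = 0`. -/
structure SextupleRootRelations (x y z w : k) : Prop where
  invariant : 12 * x * y ^ 2 - 18 * x ^ 2 * z - 3 * y * w + 2 * z ^ 2 = 0
  kappa_three : 9 * x ^ 2 * w + 18 * y ^ 3 - 32 * x * y * z - z * w = 0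
  kappa_four : 8 * x ^ 2 * y ^ 2 - 12 * x ^ 3 * z + 2 * x * y * w - 20 * x * z ^ 2 +
    12 * y ^ 2 * z - w ^ 2 = 0

/-- `(x, y, z, w)` are the coefficients `b₂, …, b₅` of an octavic with `b₀ = 1` and `b₁ = 0` which
is divisible by `(Y - u X)⁶`. -/
structure IsSextupleRoot (x y z w u : k) : Prop where
  y_eq : y = -(u ^ 3 + 3 * u * x)
  z_eq : z = 3 * u ^ 4 + 6 * u ^ 2 * x
  w_eq : w = -6 * u ^ 5 - 10 * u ^ 3 * x

namespace SextupleRootRelations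

variable {x y z w G u : k}

lemma exists_isSextupleRoot_of_eq_neg_three_mul_sq (h : SextupleRootRelations x y (-3 * x ^ 2) w)
    (h2 : (2 : k) ≠ 0) (h3 : (3 : k) ≠ 0) : ∃ u, IsSextupleRoot x y (-3 * x ^ 2) w u := by
  obtain ⟨hE, hK3, hK4⟩ := h
  have hw : w + 2 * x * y = 0 := pow_eq_zero_iff two_ne_zero |>.mp <| by
    linear_combination -2 * x * hE - hK4
  obtain rfl : w = -2 * x * y := by linear_combination hw
  have h18 : (2 * 3 * 3 : k) ≠ 0 := mul_ne_zero (mul_ne_zero h2 h3) h3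
  have hxD : x * (y ^ 2 + 4 * x ^ 3) = 0 := mul_left_cancel₀ h18 (by linear_combination hE)
  have hyD : y * (y ^ 2 + 4 * x ^ 3) = 0 := mul_left_cancel₀ h18 (by linear_combination hK3)
  have hD : y ^ 2 + 4 * x ^ 3 = 0 := by
    by_contra hD
    have hx : x = 0 := (mul_eq_zero.mp hxD).resolve_right hD
    have hy : y = 0 := (mul_eq_zero.mp hyD).resolve_right hD
    exact hD (by rw [hx, hy]; ring)
  obtain ⟨u, hx, hy⟩ := exists_eq_sq_and_eq_cube (x := -x) (y := y / 2) <| by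
    field_simp
    linear_combination -hD
  obtain rfl : x = -u ^ 2 := by linear_combination -hx
  obtain rfl : y = 2 * u ^ 3 := by rw [← hy, mul_div_cancel₀ _ h2]
  exact ⟨u, by ring, by ring, by ring⟩

lemma exists_isSextupleRoot_of_eq_neg_two_mul
    (h : SextupleRootRelations x y (G - 3 * x ^ 2) (-2 * x * y)) (h2 : (2 : k) ≠ 0)
    (h3 : (3 : k) ≠ 0) (hG : G ≠ 0) : ∃ u, IsSextupleRoot x y (G - 3 * x ^ 2) (-2 * x * y) u := by
  obtain ⟨hE, hK3, hK4⟩ := h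
  obtain rfl : y = 0 := mul_left_cancel₀ (mul_ne_zero h2 (pow_ne_zero 2 hG)) <| by
    linear_combination y * hE - x * hK3
  refine ⟨0, by ring, ?_, by ring⟩
  suffices G - 3 * x ^ 2 = 0 by linear_combination this
  by_contra hz
  obtain rfl : G = 12 * x ^ 2 := mul_left_cancel₀ (mul_ne_zero h2 hz) <| by
    linear_combination hE
  have hx : x ^ 5 = 0 :=
    mul_left_cancel₀ (pow_ne_zero 3 (mul_ne_zero (mul_ne_zero h2 h2) h3)) <| by
      linear_combination -hK4
  exact hG (by rw [pow_eq_zero_iff (by decide) |>.mp hx]; ring)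

lemma isSextupleRoot (h : SextupleRootRelations x y (G - 3 * x ^ 2) (-2 * x * y - 2 * u * G))
    (h2 : (2 : k) ≠ 0) (h3 : (3 : k) ≠ 0) (hG : G ≠ 0) (hu : u ≠ 0) :
    IsSextupleRoot x y (G - 3 * x ^ 2) (-2 * x * y - 2 * u * G) u := by
  obtain ⟨hE, hK3, hK4⟩ := h
  have hD : 3 * u * (y ^ 2 + 4 * x ^ 3) = G * (u * x - y) :=
    mul_left_cancel₀ (mul_ne_zero h2 hG) (by linear_combination y * hE - x * hK3)
  have hGu : u * G = 12 * u * x ^ 2 + 3 * x * y - 3 * u ^ 2 * y :=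
    mul_left_cancel₀ (mul_ne_zero h2 hG) (by linear_combination u * hE - 6 * x * hD)
  have hxy : x * y * (y + 3 * u * x + u ^ 3) = 0 := mul_left_cancel₀ h3 <| by
    linear_combination u * hD + (u * x - y) * hGu
  suffices hy : y = -(u ^ 3 + 3 * u * x) by
    subst hy
    obtain rfl : G = 3 * x ^ 2 + 6 * u ^ 2 * x + 3 * u ^ 4 :=
      mul_left_cancel₀ hu (by linear_combination hGu)
    exact ⟨rfl, by ring, by ring⟩
  have h4 : (2 * 2 : k) ≠ 0 := mul_ne_zero h2 h2
  have h6 : (2 * 3 : k) ≠ 0 := mul_ne_zero h2 h3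
  obtain (rfl | rfl) | hy := mul_eq_zero.mp hxy |>.imp_left mul_eq_zero.mp
  · obtain rfl : G = -3 * u * y := mul_left_cancel₀ hu (by linear_combination hGu)
    have hy : y ≠ 0 := fun hy => hG (by rw [hy, mul_zero])
    exact mul_left_cancel₀ (mul_ne_zero (pow_ne_zero 2 (mul_ne_zero h6 hy)) hu) <| by
      linear_combination -hK4
  · obtain rfl : G = 12 * x ^ 2 := mul_left_cancel₀ hu (by linear_combination hGu)
    have hx : x ≠ 0 := fun hx => hG (by rw [hx]; ring)
    have hux : u ^ 2 + 3 * x = 0 :=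
      mul_left_cancel₀ (pow_ne_zero 2 (mul_ne_zero (mul_ne_zero h4 h6) (pow_ne_zero 2 hx))) <| by
        linear_combination -hK4
    linear_combination u * hux
  · linear_combination hy

lemma exists_isSextupleRoot (h : SextupleRootRelations x y z w) (h2 : (2 : k) ≠ 0)
    (h3 : (3 : k) ≠ 0) : ∃ u, IsSextupleRoot x y z w u := by
  obtain ⟨G, rfl⟩ : ∃ G, z = G - 3 * x ^ 2 := ⟨z + 3 * x ^ 2, by ring⟩
  by_cases hG : G = 0
  · obtain ⟨u, hu⟩ := exists_isSextupleRoot_of_eq_neg_three_mul_sq (by simpa [hG] using h) h2 h3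
    exact ⟨u, by simpa [hG] using hu⟩
  obtain ⟨u, rfl⟩ : ∃ u, w = -2 * x * y - 2 * u * G :=
    ⟨-(w + 2 * x * y) / (2 * G), by field_simp; ring⟩
  by_cases hu : u = 0
  · have hw : -2 * x * y - 2 * u * G = -2 * x * y := by rw [hu]; ring
    rw [hw] at h ⊢
    exact exists_isSextupleRoot_of_eq_neg_two_mul h h2 h3 hG
  · exact ⟨u, isSextupleRoot h h2 h3 hG hu⟩

end SextupleRootRelations

end SextupleRoot

section OctavicShear

variable {n i : ℕ} {t : k} {b : ℕ → k}

lemma HasRootOfMultiplicity.of_shear {r : ℕ}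
    (h : HasRootOfMultiplicity r (binForm n (shear t b))) : HasRootOfMultiplicity r (binForm n b) :=
  .of_substForm (g := !![1, 0; t, 1]) (det_shear.trans_ne one_ne_zero) <| by
    rwa [substForm_shear_binForm]

lemma InvariantsVanish.shear (h : InvariantsVanish (binForm 8 b)) :
    InvariantsVanish (binForm 8 (shear t b)) := by
  rw [← substForm_shear_binForm]
  exact invariantsVanish_substForm _ h

lemma kappaCoeff_shear (h8 : ((8 : ℕ).factorial : k) ≠ 0) (hi : i ≤ 4) :
    kappaCoeff (shear t b) i = shear t (kappaCoeff b) i := by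
  refine eq_of_binForm_eq_binForm (natCast_factorial_ne_zero_of_le (by decide) h8) ?_ hi
  rw [← kappa_binForm _ h8, ← substForm_shear_binForm, kappa_substForm, kappa_binForm _ h8,
    substForm_shear_binForm, det_shear, one_pow, C_1, one_mul]

lemma kappaCoeff_shear_eq_zero (h8 : ((8 : ℕ).factorial : k) ≠ 0) (h4 : i ≤ 4)
    (h : ∀ j ≤ i, kappaCoeff b j = 0) : kappaCoeff (shear t b) i = 0 := by
  rw [kappaCoeff_shear h8 h4, shear_eq_of_forall_lt fun j hj => h j hj.le, h i le_rfl]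

end OctavicShear

section Octavic

variable {b : ℕ → k}

lemma binForm_eight : binForm 8 b = C (b 0) * X 1 ^ 8 + 8 * C (b 1) * X 0 * X 1 ^ 7 +
    28 * C (b 2) * X 0 ^ 2 * X 1 ^ 6 + 56 * C (b 3) * X 0 ^ 3 * X 1 ^ 5 +
    70 * C (b 4) * X 0 ^ 4 * X 1 ^ 4 + 56 * C (b 5) * X 0 ^ 5 * X 1 ^ 3 +
    28 * C (b 6) * X 0 ^ 6 * X 1 ^ 2 + 8 * C (b 7) * X 0 ^ 7 * X 1 + C (b 8) * X 0 ^ 8 := by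
  simp only [binForm, Finset.sum_range_succ, Finset.sum_range_zero, Nat.choose, map_mul,
    map_ofNat, Nat.cast_ofNat, Nat.reduceAdd, Nat.reduceSub, zero_add, add_zero, Nat.cast_one,
    map_one]
  ring

lemma InvariantsVanish.quadratic_eq_zero (h8 : ((8 : ℕ).factorial : k) ≠ 0)
    (h : InvariantsVanish (binForm 8 b)) :
    b 0 * b 8 - 8 * b 1 * b 7 + 28 * b 2 * b 6 - 56 * b 3 * b 5 + 35 * b 4 ^ 2 = 0 := by
  have hE := h.f_f
  rw [constantCoeff_transvectant_binForm _ _ h8, contraction_eight_self] at hE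
  exact (mul_eq_zero.mp hE).resolve_left (ofNat_ne_zero_of_factorial_ne_zero h8 (by decide))

lemma quarticM_binForm (h8 : ((8 : ℕ).factorial : k) ≠ 0) :
    quarticM (binForm 8 b) = binForm 4 (contraction 4 b (kappaCoeff b)) := by
  rw [quarticM, kappa_binForm _ h8]
  exact transvectant_binForm_eq_binForm_contraction 4 4 _ _ h8

lemma InvariantsVanish.contraction_kappaCoeff (h8 : ((8 : ℕ).factorial : k) ≠ 0)
    (h : InvariantsVanish (binForm 8 b)) :
    contraction 4 (contraction 4 b (kappaCoeff b)) (kappaCoeff b) 0 = 0 := by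
  have h4 : ((4 : ℕ).factorial : k) ≠ 0 := natCast_factorial_ne_zero_of_le (by decide) h8
  rw [← h.m_kappa, quarticM_binForm h8, kappa_binForm _ h8,
    constantCoeff_transvectant_binForm _ _ h4]

lemma InvariantsVanish.contraction_hessianCoeff (h8 : ((8 : ℕ).factorial : k) ≠ 0)
    (h : InvariantsVanish (binForm 8 b)) :
    contraction 4 (contraction 4 b (kappaCoeff b)) (hessianCoeff (kappaCoeff b)) 0 = 0 := by
  have h4 : ((4 : ℕ).factorial : k) ≠ 0 := natCast_factorial_ne_zero_of_le (by decide) h8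
  rw [← h.m_hessian, quarticM_binForm h8, kappa_binForm _ h8, hessian_binForm _ h4,
    constantCoeff_transvectant_binForm _ _ h4]

lemma kappaCoeff_two_eq_zero_iff (h3 : (3 : k) ≠ 0) : kappaCoeff b 2 = 0 ↔
    b 0 * b 8 - 2 * b 1 * b 7 - 8 * b 2 * b 6 + 34 * b 3 * b 5 - 25 * b 4 ^ 2 = 0 := by
  simp only [kappaCoeff, div_eq_zero_iff, h3, or_false]

end Octavic

section OctavicRoots

variable {b : ℕ → k}

lemma coeff_one_eq_zero_and_coeff_two_eq_zero (h8 : ((8 : ℕ).factorial : k) ≠ 0)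
    (hb : InvariantsVanish (binForm 8 b)) (hK : ∀ i < 3, kappaCoeff b i = 0)
    (hK3 : kappaCoeff b 3 ≠ 0) (hK4 : kappaCoeff b 4 = 0) : b 1 = 0 ∧ b 2 = 0 := by
  have h2 : (2 : k) ≠ 0 := ofNat_ne_zero_of_factorial_ne_zero h8 (by decide)
  have h7 := hb.contraction_hessianCoeff h8
  have h5 := hb.contraction_kappaCoeff h8
  simp only [contraction_four, hessianCoeff, hK 0 (by decide), hK 1 (by decide), hK 2 (by decide),
    hK4] at h5 h7
  have h1 : b 1 = 0 := mul_left_cancel₀ (mul_ne_zero (pow_ne_zero 3 h2) (pow_ne_zero 3 hK3)) <| by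
    linear_combination h7
  refine ⟨h1, mul_left_cancel₀ (mul_ne_zero (pow_ne_zero 4 h2) (pow_ne_zero 2 hK3)) ?_⟩
  linear_combination h5

lemma coeff_zero_eq_zero_or_kappaCoeff_four_eq_zero (h8 : ((8 : ℕ).factorial : k) ≠ 0)
    (hb : InvariantsVanish (binForm 8 b)) (hK : ∀ i < 4, kappaCoeff b i = 0) :
    b 0 = 0 ∨ kappaCoeff b 4 = 0 := by
  have h5 := hb.contraction_kappaCoeff h8
  simp only [contraction_four, hK 0 (by decide), hK 1 (by decide), hK 2 (by decide),
    hK 3 (by decide)] at h5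
  exact (mul_eq_zero.mp (show b 0 * kappaCoeff b 4 ^ 2 = 0 by linear_combination h5)).imp_right
    (pow_eq_zero_iff two_ne_zero).mp

lemma eq_zero_of_monomial_relations {p x y z w : k} (h2 : (2 : k) ≠ 0) (h3 : (3 : k) ≠ 0)
    (hp : p ≠ 0) (hxz : 3 * x * z = 2 * y ^ 2) (hpw : p * w = 10 * x ^ 2)
    (hpz : p * z ^ 2 = 12 * x ^ 2 * y) (h : 9 * x * w - 5 * y * z ≠ 0) : y = 0 := by
  by_contra hy
  have hpy : p * y ^ 3 = 27 * x ^ 4 :=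
    mul_left_cancel₀ (mul_ne_zero (pow_ne_zero 2 h2) hy) <| by
      linear_combination 9 * x ^ 2 * hpz - p * (3 * x * z + 2 * y ^ 2) * hxz
  obtain rfl : x = 0 := mul_left_cancel₀ (mul_ne_zero (mul_ne_zero h3 hp) h) <| by
    linear_combination 27 * x ^ 2 * hpw - 5 * y * p * hxz - 10 * hpy
  exact mul_ne_zero h2 (pow_ne_zero 2 hy) (by linear_combination -hxz)

lemma hasRootOfMultiplicity_two_of_kappaCoeff_four_eq_zero (h8 : ((8 : ℕ).factorial : k) ≠ 0)
    (hb : InvariantsVanish (binForm 8 b)) (hK : ∀ i < 3, kappaCoeff b i = 0)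
    (hK3 : kappaCoeff b 3 ≠ 0) (hK4 : kappaCoeff b 4 = 0) :
    HasRootOfMultiplicity 2 (binForm 8 b) := by
  have h2 : (2 : k) ≠ 0 := ofNat_ne_zero_of_factorial_ne_zero h8 (by decide)
  have h3 : (3 : k) ≠ 0 := ofNat_ne_zero_of_factorial_ne_zero h8 (by decide)
  have h5 : (5 : k) ≠ 0 := ofNat_ne_zero_of_factorial_ne_zero h8 (by decide)
  obtain ⟨h1, hb2⟩ := coeff_one_eq_zero_and_coeff_two_eq_zero h8 hb hK hK3 hK4
  have hE := hb.quadratic_eq_zero h8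
  have hK2 := (kappaCoeff_two_eq_zero_iff h3).mp (hK 2 (by decide))
  have hK0 := hK 0 (by decide)
  have hK1 := hK 1 (by decide)
  simp only [kappaCoeff, h1, hb2] at hE hK0 hK1 hK2 hK3 hK4
  by_cases h0 : b 0 = 0
  · exact hasRootOfMultiplicity_of_X_pow_dvd (sq_X_zero_dvd_binForm h0 h1)
  have h35 : 3 * b 3 * b 5 = 2 * b 4 ^ 2 :=
    mul_left_cancel₀ (mul_ne_zero (mul_ne_zero h2 h3) h5) (by linear_combination hK2 - hE)
  have h6 : b 0 * b 6 = 10 * b 3 ^ 2 := mul_left_cancel₀ h2 (by linear_combination hK0)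
  have h7 : b 0 * b 7 = 5 * b 3 * b 4 := by linear_combination hK1
  have h55 : b 0 * b 5 ^ 2 = 12 * b 3 ^ 2 * b 4 :=
    mul_left_cancel₀ (mul_ne_zero (mul_ne_zero h2 h2) h5) <| by
      linear_combination -b 0 * hK4 - 12 * b 3 * h7 + 30 * b 4 * h6
  have h4 : b 4 = 0 := eq_zero_of_monomial_relations h2 h3 h0 h35 h6 h55 fun h =>
    hK3 (by linear_combination h)
  have hb5 : b 5 = 0 := by simpa [h4, h0] using h55
  have hb7 : b 7 = 0 := by simpa [h4, h0] using h7
  have hb8 : b 8 = 0 := by simpa [h4, hb5, h0] using hE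
  exact hasRootOfMultiplicity_of_X_pow_dvd (sq_X_one_dvd_binForm (n := 6) hb7 hb8)

lemma hasRootOfMultiplicity_two_of_kappaCoeff_three_ne_zero (h8 : ((8 : ℕ).factorial : k) ≠ 0)
    (hb : InvariantsVanish (binForm 8 b)) (hK : ∀ i < 3, kappaCoeff b i = 0)
    (hK3 : kappaCoeff b 3 ≠ 0) : HasRootOfMultiplicity 2 (binForm 8 b) := by
  have h4 : (4 : k) ≠ 0 := ofNat_ne_zero_of_factorial_ne_zero h8 (by decide)
  refine .of_shear (t := -kappaCoeff b 4 / (4 * kappaCoeff b 3)) ?_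
  refine hasRootOfMultiplicity_two_of_kappaCoeff_four_eq_zero h8 hb.shear
    (fun i hi => kappaCoeff_shear_eq_zero h8 (by omega) fun j hj => hK j (hj.trans_lt hi)) ?_ ?_
  · rwa [kappaCoeff_shear h8 (by decide), shear_eq_of_forall_lt hK]
  · rw [kappaCoeff_shear h8 (by decide), shear_succ_eq_of_forall_lt hK]
    push_cast
    field_simp
    ring

lemma exists_coeff_eq_of_coeff_two_eq_zero (h8 : ((8 : ℕ).factorial : k) ≠ 0)
    (hb : InvariantsVanish (binForm 8 b)) (hK : ∀ i < 4, kappaCoeff b i = 0)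
    (h0 : b 0 = 0) (h1 : b 1 ≠ 0) (hb2 : b 2 = 0) : ∃ v, b 3 = -3 * b 1 * v ^ 2 ∧
      b 4 = 8 * b 1 * v ^ 3 ∧ b 5 = -15 * b 1 * v ^ 4 ∧ b 6 = 24 * b 1 * v ^ 5 ∧
      b 7 = -35 * b 1 * v ^ 6 ∧ b 8 = 48 * b 1 * v ^ 7 := by
  have h2 : (2 : k) ≠ 0 := ofNat_ne_zero_of_factorial_ne_zero h8 (by decide)
  have h3 : (3 : k) ≠ 0 := ofNat_ne_zero_of_factorial_ne_zero h8 (by decide)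
  have h5 : (5 : k) ≠ 0 := ofNat_ne_zero_of_factorial_ne_zero h8 (by decide)
  have hE := hb.quadratic_eq_zero h8
  have hK0 := hK 0 (by decide)
  have hK1 := hK 1 (by decide)
  have hK2 := (kappaCoeff_two_eq_zero_iff h3).mp (hK 2 (by decide))
  have hK3 := hK 3 (by decide)
  simp only [kappaCoeff, h0, hb2] at hE hK0 hK1 hK2 hK3
  obtain ⟨x, hx⟩ : ∃ x, b 3 = -3 * b 1 * x := ⟨-b 3 / (3 * b 1), by field_simp⟩
  obtain ⟨y, hy⟩ : ∃ y, b 4 = 8 * b 1 * y := ⟨b 4 / (2 ^ 3 * b 1), by field_simp; norm_num⟩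
  rw [hx, hy] at hE hK0 hK1 hK2 hK3
  have h12 : (2 ^ 2 * 3 : k) ≠ 0 := mul_ne_zero (pow_ne_zero 2 h2) h3
  have hb5 : b 5 = -15 * b 1 * x ^ 2 :=
    mul_left_cancel₀ (mul_ne_zero h12 h1) (by linear_combination -hK0)
  rw [hb5] at hE hK1 hK2 hK3
  have hb6 : b 6 = 24 * b 1 * x * y :=
    mul_left_cancel₀ (mul_ne_zero h5 h1) (by linear_combination -hK1)
  rw [hb6] at hE hK2 hK3
  have hxy : x ^ 3 = y ^ 2 := by
    have hc : 5 * (2 ^ 2 * 3) ^ 3 * b 1 ^ 2 ≠ 0 :=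
      mul_ne_zero (mul_ne_zero h5 (pow_ne_zero 3 h12)) (pow_ne_zero 2 h1)
    exact mul_left_cancel₀ hc (by linear_combination -hE + 4 * hK2)
  obtain ⟨v, rfl, rfl⟩ := exists_eq_sq_and_eq_cube hxy
  refine ⟨v, hx, hy, hb5.trans (by ring), hb6.trans (by ring), ?_, ?_⟩
  · exact mul_left_cancel₀ (mul_ne_zero h2 h1) (by linear_combination -hK2)
  · exact mul_left_cancel₀ h1 (by linear_combination hK3)

lemma hasRootOfMultiplicity_six_of_coeff_two_eq_zero (h8 : ((8 : ℕ).factorial : k) ≠ 0)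
    (hb : InvariantsVanish (binForm 8 b)) (hK : ∀ i < 4, kappaCoeff b i = 0)
    (h0 : b 0 = 0) (h1 : b 1 ≠ 0) (h2 : b 2 = 0) : HasRootOfMultiplicity 6 (binForm 8 b) := by
  obtain ⟨v, h3, h4, h5, h6, h7, h8⟩ := exists_coeff_eq_of_coeff_two_eq_zero h8 hb hK h0 h1 h2
  refine hasRootOfMultiplicity_of_X_one_add_pow_dvd (u := -v)
    ⟨C (8 * b 1) * X 0 * (X 1 + C (6 * v) * X 0), ?_⟩
  rw [binForm_eight, h0, h2, h3, h4, h5, h6, h7, h8]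
  simp only [map_mul, map_neg, map_pow, map_ofNat, map_zero]
  ring

lemma hasRootOfMultiplicity_six_of_coeff_zero_eq_zero (h8 : ((8 : ℕ).factorial : k) ≠ 0)
    (hb : InvariantsVanish (binForm 8 b)) (hK : ∀ i < 4, kappaCoeff b i = 0)
    (h0 : b 0 = 0) (h1 : b 1 ≠ 0) : HasRootOfMultiplicity 6 (binForm 8 b) := by
  have h2 : (2 : k) ≠ 0 := ofNat_ne_zero_of_factorial_ne_zero h8 (by decide)
  have hlt : ∀ j < 1, b j = 0 := by simpa using h0
  refine .of_shear (t := -b 2 / (2 * b 1)) ?_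
  refine hasRootOfMultiplicity_six_of_coeff_two_eq_zero h8 hb.shear
    (fun i hi => kappaCoeff_shear_eq_zero h8 (by omega) fun j hj => hK j (hj.trans_lt hi))
    ?_ ?_ ?_
  · rwa [shear_eq_of_forall_lt (by simp)]
  · rwa [shear_eq_of_forall_lt hlt]
  · rw [shear_succ_eq_of_forall_lt hlt]
    push_cast
    field_simp
    ring

lemma exists_sextupleRootRelations_of_coeff_one_eq_zero (h8 : ((8 : ℕ).factorial : k) ≠ 0)
    (hb : InvariantsVanish (binForm 8 b)) (hK : ∀ i < 5, kappaCoeff b i = 0)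
    (h0 : b 0 ≠ 0) (h1 : b 1 = 0) : ∃ x y z w, SextupleRootRelations x y z w ∧
      b 2 = b 0 * x ∧ b 3 = b 0 * y ∧ b 4 = b 0 * z ∧ b 5 = b 0 * w ∧
      b 6 = b 0 * (10 * y ^ 2 - 15 * x * z) ∧ b 7 = b 0 * (5 * y * z - 9 * x * w) ∧
      b 8 = b 0 * (80 * x * y ^ 2 - 120 * x ^ 2 * z - 34 * y * w + 25 * z ^ 2) := by
  have h2 : (2 : k) ≠ 0 := ofNat_ne_zero_of_factorial_ne_zero h8 (by decide)
  have h3 : (3 : k) ≠ 0 := ofNat_ne_zero_of_factorial_ne_zero h8 (by decide)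
  have h5 : (5 : k) ≠ 0 := ofNat_ne_zero_of_factorial_ne_zero h8 (by decide)
  have hE := hb.quadratic_eq_zero h8
  have hK0 := hK 0 (by decide)
  have hK1 := hK 1 (by decide)
  have hK2 := (kappaCoeff_two_eq_zero_iff h3).mp (hK 2 (by decide))
  have hK3 := hK 3 (by decide)
  have hK4 := hK 4 (by decide)
  simp only [kappaCoeff, h1] at hE hK0 hK1 hK2 hK3 hK4
  obtain ⟨x, hx⟩ : ∃ x, b 2 = b 0 * x := ⟨b 2 / b 0, by field_simp⟩
  obtain ⟨y, hy⟩ : ∃ y, b 3 = b 0 * y := ⟨b 3 / b 0, by field_simp⟩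
  obtain ⟨z, hz⟩ : ∃ z, b 4 = b 0 * z := ⟨b 4 / b 0, by field_simp⟩
  obtain ⟨w, hw⟩ : ∃ w, b 5 = b 0 * w := ⟨b 5 / b 0, by field_simp⟩
  rw [hx, hy, hz, hw] at hE hK2 hK3 hK4
  have h6 : b 6 = b 0 * (10 * y ^ 2 - 15 * x * z) :=
    mul_left_cancel₀ (mul_ne_zero h2 h0) (by rw [hx, hy, hz] at hK0; linear_combination hK0)
  have h7 : b 7 = b 0 * (5 * y * z - 9 * x * w) :=
    mul_left_cancel₀ h0 (by rw [hx, hy, hz, hw] at hK1; linear_combination hK1)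
  have hb8 : b 8 = b 0 * (80 * x * y ^ 2 - 120 * x ^ 2 * z - 34 * y * w + 25 * z ^ 2) :=
    mul_left_cancel₀ h0 (by rw [h6] at hK2; linear_combination hK2)
  rw [h6, h7, hb8] at hE hK3 hK4
  have h00 : b 0 ^ 2 ≠ 0 := pow_ne_zero 2 h0
  refine ⟨x, y, z, w, ⟨?_, ?_, ?_⟩, hx, hy, hz, hw, h6, h7, hb8⟩
  · exact mul_left_cancel₀ (mul_ne_zero (mul_ne_zero (mul_ne_zero h2 h3) h5) h00)
      (by linear_combination hE)
  · exact mul_left_cancel₀ (mul_ne_zero h5 h00) (by linear_combination hK3)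
  · exact mul_left_cancel₀ (mul_ne_zero (mul_ne_zero (pow_ne_zero 2 h2) h5) h00)
      (by linear_combination hK4)

lemma hasRootOfMultiplicity_six_of_coeff_one_eq_zero (h8 : ((8 : ℕ).factorial : k) ≠ 0)
    (hb : InvariantsVanish (binForm 8 b)) (hK : ∀ i < 5, kappaCoeff b i = 0)
    (h0 : b 0 ≠ 0) (h1 : b 1 = 0) : HasRootOfMultiplicity 6 (binForm 8 b) := by
  obtain ⟨x, y, z, w, hrel, hb2, hb3, hb4, hb5, hb6, hb7, hb8⟩ :=
    exists_sextupleRootRelations_of_coeff_one_eq_zero h8 hb hK h0 h1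
  obtain ⟨u, rfl, rfl, rfl⟩ := hrel.exists_isSextupleRoot
    (ofNat_ne_zero_of_factorial_ne_zero h8 (by decide))
    (ofNat_ne_zero_of_factorial_ne_zero h8 (by decide))
  refine hasRootOfMultiplicity_of_X_one_add_pow_dvd (u := -u) ⟨C (b 0) *
    (X 1 ^ 2 + C (6 * u) * X 0 * X 1 + C (28 * x + 21 * u ^ 2) * X 0 ^ 2), ?_⟩
  rw [binForm_eight, h1, hb2, hb3, hb4, hb5, hb6, hb7, hb8]
  simp only [map_mul, map_add, map_sub, map_neg, map_pow, map_ofNat, map_zero]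
  ring

lemma hasRootOfMultiplicity_six_of_kappa_eq_zero (h8 : ((8 : ℕ).factorial : k) ≠ 0)
    (hb : InvariantsVanish (binForm 8 b)) (hK : ∀ i < 5, kappaCoeff b i = 0)
    (h0 : b 0 ≠ 0) : HasRootOfMultiplicity 6 (binForm 8 b) := by
  refine .of_shear (t := -b 1 / b 0) ?_
  refine hasRootOfMultiplicity_six_of_coeff_one_eq_zero h8 hb.shear
    (fun i hi => kappaCoeff_shear_eq_zero h8 (by omega) fun j hj => hK j (hj.trans_lt hi)) ?_ ?_
  · rwa [shear_eq_of_forall_lt (by simp)]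
  · rw [shear_succ_eq_of_forall_lt (by simp)]
    push_cast
    field_simp
    ring

lemma hasRootOfMultiplicity_two_of_kappaCoeff_eq_zero (h8 : ((8 : ℕ).factorial : k) ≠ 0)
    (hb : InvariantsVanish (binForm 8 b)) (hK : ∀ i < 3, kappaCoeff b i = 0) :
    HasRootOfMultiplicity 2 (binForm 8 b) := by
  by_cases hK3 : kappaCoeff b 3 = 0
  · replace hK : ∀ i < 4, kappaCoeff b i = 0 := Nat.forall_lt_succ_right.mpr ⟨hK, hK3⟩
    by_cases h0 : b 0 = 0
    · by_cases h1 : b 1 = 0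
      · exact hasRootOfMultiplicity_of_X_pow_dvd (sq_X_zero_dvd_binForm h0 h1)
      · exact (hasRootOfMultiplicity_six_of_coeff_zero_eq_zero h8 hb hK h0 h1).mono (by decide)
    · have hK4 :=
        (coeff_zero_eq_zero_or_kappaCoeff_four_eq_zero h8 hb hK).resolve_left h0
      exact (hasRootOfMultiplicity_six_of_kappa_eq_zero h8 hb
        (Nat.forall_lt_succ_right.mpr ⟨hK, hK4⟩) h0).mono (by decide)
  · exact hasRootOfMultiplicity_two_of_kappaCoeff_three_ne_zero h8 hb hK hK3

theorem InvariantsVanish.hasRootOfMultiplicity_two {f : MvPolynomial (Fin 2) k}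
    (hf : f.IsHomogeneous 8) (h8 : ((8 : ℕ).factorial : k) ≠ 0) (h : InvariantsVanish f) :
    HasRootOfMultiplicity 2 f := by
  have h4 : ((4 : ℕ).factorial : k) ≠ 0 := natCast_factorial_ne_zero_of_le (by decide) h8
  have hκ : (kappa f).IsHomogeneous 4 := by
    obtain ⟨b, rfl⟩ := exists_eq_binForm h8 hf
    rw [kappa_binForm _ h8]
    exact isHomogeneous_binForm 4 _
  obtain ⟨l, hl, hl0, hdvd⟩ :=
    hasRootOfMultiplicity_three_of_invariants_eq_zero hκ h4 h.kappa_kappa h.kappa_hessian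
  obtain ⟨g, hg, hgl⟩ := exists_substForm_eq_X_zero hl hl0
  obtain ⟨b, hb⟩ := exists_eq_binForm h8 (isHomogeneous_substForm g hf)
  refine .of_substForm hg ?_
  have hvanish := invariantsVanish_substForm g h
  have hdvd' : X 0 ^ 3 ∣ kappa (substForm g f) := by
    rw [kappa_substForm, ← hgl, substForm_eq_substAlgHom, substForm_eq_substAlgHom, ← map_pow]
    exact (map_dvd _ hdvd).mul_left _
  rw [hb] at hvanish hdvd' ⊢
  rw [kappa_binForm _ h8] at hdvd'
  exact hasRootOfMultiplicity_two_of_kappaCoeff_eq_zero h8 hvanish fun i hi =>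
    eq_zero_of_X_zero_pow_dvd_binForm h4 hdvd' (by omega) hi

end OctavicRoots

section OctForm

lemma factorial_eight_ne_zero_of_charOK (hk : CharOK k) : ((8 : ℕ).factorial : k) ≠ 0 := by
  have natCast_ne_zero {p : ℕ} (hp : p.Prime) (hpk : ringChar k ≠ p) : (p : k) ≠ 0 := fun h =>
    ((Nat.dvd_prime hp).mp (ringChar.dvd h)).elim CharP.ringChar_ne_one hpk
  have h2 := natCast_ne_zero Nat.prime_two hk.1
  have h3 := natCast_ne_zero Nat.prime_three hk.2.1
  have h5 := natCast_ne_zero Nat.prime_five hk.2.2.1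
  have h7 := natCast_ne_zero Nat.prime_seven hk.2.2.2
  rw [show (8 : ℕ).factorial = 2 ^ 7 * 3 ^ 2 * 5 * 7 from rfl, Nat.cast_mul, Nat.cast_mul,
    Nat.cast_mul, Nat.cast_pow, Nat.cast_pow]
  exact mul_ne_zero (mul_ne_zero (mul_ne_zero (pow_ne_zero _ h2) (pow_ne_zero _ h3)) h5) h7

variable (a : Fin 9 → k)

lemma isHomogeneous_octForm : (octForm a).IsHomogeneous 8 :=
  IsHomogeneous.sum _ _ _ fun i _ => by
    have h := ((isHomogeneous_C_mul_X_pow (a i) (0 : Fin 2) i).mul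
      (isHomogeneous_X_pow (R := k) (1 : Fin 2) (8 - i)))
    rwa [Nat.add_sub_cancel' (Nat.le_of_lt_succ i.isLt)] at h

variable {a}

lemma invariantsVanish_octForm (h8 : ((8 : ℕ).factorial : k) ≠ 0) (h2 : J2 a = 0) (h4 : J4 a = 0)
    (h5 : J5 a = 0) (h6 : J6 a = 0) (h7 : J7 a = 0) : InvariantsVanish (octForm a) := by
  have n2 : (2 : k) ≠ 0 := ofNat_ne_zero_of_factorial_ne_zero h8 (by decide)
  have n3 : (3 : k) ≠ 0 := ofNat_ne_zero_of_factorial_ne_zero h8 (by decide)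
  have n5 : (5 : k) ≠ 0 := ofNat_ne_zero_of_factorial_ne_zero h8 (by decide)
  have n7 : (7 : k) ≠ 0 := ofNat_ne_zero_of_factorial_ne_zero h8 (by decide)
  constructor
  · exact (mul_eq_zero.mp h2).resolve_left (by simp [n2, n5, n7])
  · exact (mul_eq_zero.mp h4).resolve_left (by simp [n2, n3, n7])
  · exact (mul_eq_zero.mp h5).resolve_left (by simp [n2, n5, n7])
  · exact (mul_eq_zero.mp h6).resolve_left (by simp [n2, n3, n7])
  · exact (mul_eq_zero.mp h7).resolve_left (by simp [n2, n3, n5, n7])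

end OctForm

end BinaryForm

theorem hasMultipleRoot_of_J_eq_zero_general (hk : CharOK k) (a : Fin 9 → k) (h2 : J2 a = 0)
    (h4 : J4 a = 0) (h5 : J5 a = 0) (h6 : J6 a = 0) (h7 : J7 a = 0) :
    ∃ x0 y0 : k, ¬(x0 = 0 ∧ y0 = 0) ∧ (C y0 * X 0 - C x0 * X 1) ^ 2 ∣ octForm a := by
  have h8 := BinaryForm.factorial_eight_ne_zero_of_charOK hk
  have hvanish := BinaryForm.invariantsVanish_octForm h8 h2 h4 h5 h6 h7
  exact (hvanish.hasRootOfMultiplicity_two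
    (BinaryForm.isHomogeneous_octForm a) h8).exists_pow_dvd

/-- If all of `J_2, ..., J_7` vanish on a binary octavic `f` over an algebraically closed
field of characteristic ∉ {2,3,5,7}, then `f` has a multiple root, i.e. `f` is divisible by
the square of a nonzero linear form. -/
theorem hasMultipleRoot_of_J_eq_zero (k : Type*) [Field k] [IsAlgClosed k] (hk : CharOK k)
    (a : Fin 9 → k)
    (h2 : J2 a = 0) (h3 : J3 a = 0) (h4 : J4 a = 0) (h5 : J5 a = 0)
    (h6 : J6 a = 0) (h7 : J7 a = 0) :
    ∃ x0 y0 : k, ¬(x0 = 0 ∧ y0 = 0) ∧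
      (C y0 * X 0 - C x0 * X 1) ^ 2 ∣ octForm a :=
  hasMultipleRoot_of_J_eq_zero_general hk a h2 h4 h5 h6 h7

end
end
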